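/- Let p ≡ 1 (mod 16) be a prime and let K = ℚ(⁴√p) with class number h_K. Then 2 ∥ h_K (i.e., 2 ∣ h_K and 4 ∤ h_K) if and only if the quartic residue symbol (2/p)₄ equals −1, i.e., if and only if 2 is not a fourth power modulo p. -/

import Mathlib

open Polynomial NumberField

namespace PQ

lemma exists_gen (p : ℕ) [Fact p.Prime] : ∃ g : (ZMod p)ˣ, ∀ x : (ZMod p)ˣ, ∃ m : ℕ, x = g ^ m := by
  obtain ⟨g, hg⟩ := IsCyclic.exists_generator (α := (ZMod p)ˣ)
  refine ⟨g, fun x => ?_⟩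
  have := hg x
  rw [← mem_powers_iff_mem_zpowers] at this
  obtain ⟨m, hm⟩ := this
  exact ⟨m, hm.symm⟩

lemma orderOf_gen (p : ℕ) [Fact p.Prime] (g : (ZMod p)ˣ) (hg : ∀ x : (ZMod p)ˣ, ∃ m : ℕ, x = g ^ m) :
    orderOf g = p - 1 := by
  have h := orderOf_eq_card_of_forall_mem_zpowers (g := g) (fun x => by
    obtain ⟨m, rfl⟩ := hg x
    exact Subgroup.npow_mem_zpowers g m)
  rw [h, Nat.card_eq_fintype_card, ZMod.card_units]

/-- Euler criterion for `n`-th powers. -/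
lemma exists_pow_of_pow_eq_one (p : ℕ) [hp : Fact p.Prime] (n : ℕ) (hn : n ∣ p - 1) (hn0 : 0 < n) (x : ZMod p)
    (hx : x ^ ((p - 1) / n) = 1) : ∃ y, y ^ n = x := by
  have hp1 : 0 < p - 1 := Nat.sub_pos_of_lt hp.out.one_lt
  obtain ⟨d, hd⟩ := hn
  have hd0 : 0 < d := by
    rcases Nat.eq_zero_or_pos d with h | h
    · subst h; omega
    · exact h
  have hdd : (p - 1) / n = d := by rw [hd, Nat.mul_div_cancel_left _ hn0]
  rw [hdd] at hx
  have hu : IsUnit x := IsUnit.of_pow_eq_one hx hd0.ne'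
  obtain ⟨u, rfl⟩ := hu
  obtain ⟨g, hg⟩ := exists_gen p
  obtain ⟨m, rfl⟩ := hg u
  have h1 : (g ^ m) ^ d = 1 := by
    ext; simpa using hx
  rw [← pow_mul] at h1
  have h2 := orderOf_dvd_of_pow_eq_one h1
  rw [orderOf_gen p g hg, hd] at h2
  have h3 : n ∣ m := Nat.dvd_of_mul_dvd_mul_right hd0 h2
  obtain ⟨e, rfl⟩ := h3
  exact ⟨((g ^ e : (ZMod p)ˣ) : ZMod p), by push_cast; rw [← pow_mul, mul_comm]⟩

lemma char_one_imp (p : ℕ) [hp : Fact p.Prime] (h4 : 4 ∣ p - 1) {E : Type*} [Field E]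
    (χ : MulChar (ZMod p) E) (hχ : orderOf χ = 4) (x : ZMod p) (hx : χ x = 1) :
    x ^ ((p - 1) / 4) = 1 := by
  have hu : IsUnit x := by
    by_contra h
    rw [χ.map_nonunit h] at hx
    exact zero_ne_one hx
  obtain ⟨u, rfl⟩ := hu
  obtain ⟨g, hg⟩ := exists_gen p
  obtain ⟨m, rfl⟩ := hg u
  have hord : orderOf (χ g) = 4 := by
    rw [← hχ]
    apply Nat.dvd_antisymm
    · apply orderOf_dvd_of_pow_eq_one
      rw [← MulChar.pow_apply_coe, pow_orderOf_eq_one]; simp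
    · apply orderOf_dvd_of_pow_eq_one
      ext v
      obtain ⟨l, rfl⟩ := hg v
      rw [MulChar.pow_apply_coe]
      push_cast
      rw [map_pow, ← pow_mul, mul_comm, pow_mul, pow_orderOf_eq_one]
      simp [← Units.val_pow_eq_pow_val]
  have h1 : (χ g) ^ m = 1 := by rw [← map_pow]; simpa using hx
  have h2 := orderOf_dvd_of_pow_eq_one h1
  rw [hord] at h2
  obtain ⟨e, rfl⟩ := h2
  have : g ^ (p - 1) = 1 := by rw [← orderOf_gen p g hg]; exact pow_orderOf_eq_one g
  have h3 : (g ^ (4 * e)) ^ ((p - 1) / 4) = 1 := by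
    obtain ⟨d, hd⟩ := h4
    rw [hd, Nat.mul_div_cancel_left _ (by norm_num), ← pow_mul, show 4 * e * d = (4 * d) * e by ring,
      ← hd, pow_mul, this, one_pow]
  have := congrArg (Units.val) h3
  simpa using this

lemma neg_one_quartic (p : ℕ) [hp : Fact p.Prime] (h8 : 8 ∣ p - 1) : ∃ y : ZMod p, y ^ 4 = -1 := by
  apply exists_pow_of_pow_eq_one p 4 ((by norm_num : 4 ∣ 8).trans h8) (by norm_num)
  obtain ⟨d, hd⟩ := h8
  rw [hd, show 8 * d / 4 = 2 * d by omega, pow_mul]; simp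

open scoped ComplexConjugate

lemma gi_unit_inv (z : GaussianInt) (hz : z ^ 4 = 1) : z * star z = 1 ∧ ((z ^ 2).im : ZMod 2) = 0 := by
  have h0 : (z ^ 2 - 1) * (z ^ 2 + 1) = 0 := by linear_combination hz
  constructor
  · have h1 := congrArg Zsqrtd.norm hz
    have h2 : z.norm ^ 4 = 1 := by
      have : Zsqrtd.norm (z ^ 4) = z.norm ^ 4 := by
        exact map_pow (Zsqrtd.normMonoidHom (d := -1)) z 4
      rw [← this, h1]; simp
    have h3 : z.norm = 1 := by
      have hnn : 0 ≤ z.norm := GaussianInt.norm_nonneg z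
      exact (pow_eq_one_iff_of_nonneg hnn (by norm_num)).1 h2
    have := Zsqrtd.norm_eq_mul_conj z
    rw [← this, h3]; simp
  · rcases mul_eq_zero.1 h0 with h | h
    · rw [sub_eq_zero.1 h]; simp
    · rw [eq_neg_of_add_eq_zero_left h]; simp

lemma exists_chi (p : ℕ) [hp : Fact p.Prime] (h8 : 8 ∣ p - 1) :
    ∃ χ : MulChar (ZMod p) GaussianInt, orderOf χ = 4 ∧
      jacobiSum χ⁻¹ χ⁻¹ = star (jacobiSum χ χ) ∧
      (jacobiSum χ χ).re ^ 2 + (jacobiSum χ χ).im ^ 2 = p ∧ Even (jacobiSum χ χ).im := by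
  have h4 : 4 ∣ p - 1 := (by norm_num : 4 ∣ 8).trans h8
  have hi : IsPrimitiveRoot (⟨0, 1⟩ : GaussianInt) 4 := by
    rw [IsPrimitiveRoot.iff (by norm_num)]
    refine ⟨by decide, ?_⟩
    intro l h1 h2
    interval_cases l <;> decide
  obtain ⟨χ, hχ⟩ := MulChar.exists_mulChar_orderOf (ZMod p) (n := 4) (by rwa [ZMod.card]) hi
  have hpow : ∀ u : (ZMod p)ˣ, χ u ^ 4 = 1 := fun u => by
    rw [← MulChar.pow_apply_coe, ← hχ, pow_orderOf_eq_one]; simp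
  have hinv : χ⁻¹ = χ.ringHomComp (starRingEnd GaussianInt) := by
    rw [inv_eq_iff_mul_eq_one]
    apply MulChar.ext
    intro u
    rw [MulChar.mul_apply, MulChar.ringHomComp_apply, MulChar.one_apply_coe]
    exact (gi_unit_inv _ (hpow u)).1
  have hJ : jacobiSum χ⁻¹ χ⁻¹ = star (jacobiSum χ χ) := by
    rw [hinv, jacobiSum_ringHomComp]; rfl
  refine ⟨χ, hχ, hJ, ?_, ?_⟩
  · let χc := χ.ringHomComp GaussianInt.toComplex
    have hinj : Function.Injective GaussianInt.toComplex := fun a b h => GaussianInt.toComplex_inj.1 h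
    have hχ1 : χ ≠ 1 := by rintro rfl; simp at hχ
    have hχ2 : χ * χ ≠ 1 := by
      rw [← pow_two]; intro h
      have := orderOf_dvd_of_pow_eq_one h
      rw [hχ] at this; norm_num at this
    have := jacobiSum_mul_jacobiSum_inv (F := ZMod p) (F' := ℂ) (by
        rw [ZMod.ringChar_zmod_n, ringChar.eq_zero]; exact hp.out.ne_zero.symm) (χ := χc) (φ := χc)
      ((MulChar.ringHomComp_ne_one_iff hinj).2 hχ1) ((MulChar.ringHomComp_ne_one_iff hinj).2 hχ1)
      (by rw [← MulChar.ringHomComp_mul]; exact (MulChar.ringHomComp_ne_one_iff hinj).2 hχ2)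
    rw [show χc = χ.ringHomComp GaussianInt.toComplex from rfl, MulChar.ringHomComp_inv, jacobiSum_ringHomComp, jacobiSum_ringHomComp, ← map_mul, hJ,
      ZMod.card] at this
    have h2 : jacobiSum χ χ * star (jacobiSum χ χ) = (p : GaussianInt) := by
      apply hinj; rw [this]; simp
    rw [← Zsqrtd.norm_eq_mul_conj] at h2
    have h3 : (jacobiSum χ χ).norm = (p : ℤ) := by exact_mod_cast h2
    rw [Zsqrtd.norm_def] at h3
    linarith
  · have : ((jacobiSum χ χ).im : ZMod 2) = 0 := by
      let f : GaussianInt →+ ZMod 2 := 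
        { toFun := fun z => (z.im : ZMod 2), map_zero' := by simp, map_add' := by intro a b; simp }
      change f (jacobiSum χ χ) = 0
      rw [jacobiSum, map_sum]
      have htwo : (2 : ZMod p) ≠ 0 := by
        intro h
        have h' : ((2 : ℕ) : ZMod p) = 0 := by exact_mod_cast h
        rw [ZMod.natCast_eq_zero_iff] at h'
        have h1 := Nat.le_of_dvd (by norm_num) h'
        have h2 := hp.out.two_le
        have : p = 2 := by omega
        subst this; norm_num at h8
      apply Finset.sum_involution (fun x _ => 1 - x)
      · intro a _
        rw [sub_sub_cancel, mul_comm (χ (1 - a))]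
        exact CharTwo.add_self_eq_zero _
      · intro a _ hne heq
        apply hne
        have ha : 1 - a = a := heq
        rw [ha]
        have hau : IsUnit a := by
          rw [isUnit_iff_ne_zero]; rintro rfl; simp at ha
        obtain ⟨u, rfl⟩ := hau
        rw [← pow_two]
        exact (gi_unit_inv _ (hpow u)).2
      · intros; simp
      · intros; simp
    rwa [ZMod.intCast_zmod_eq_zero_iff_dvd, Nat.cast_ofNat, ← even_iff_two_dvd] at this

end PQ

namespace PQ
universe u

lemma quartic_criterion (p : ℕ) [hp : Fact p.Prime] (h8 : 8 ∣ p - 1)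
    (χ : MulChar (ZMod p) GaussianInt) (hχ : orderOf χ = 4)
    (hJ : jacobiSum χ⁻¹ χ⁻¹ = star (jacobiSum χ χ))
    (F : Type u) [Field F] [Fintype F] (h2 : (2 : F) ≠ 0) (hpF : (p : F) ≠ 0)
    (hN : ((Fintype.card F : ℕ) : ZMod p) ^ ((p - 1) / 2) = 1)
    (w : F) (hw : w ^ 2 = p) (ρ : F) (hρ0 : ρ ≠ 0)
    (hρ : ρ ^ 2 = 2 * w * (w + ((jacobiSum χ χ).re : F))) :
    ((Fintype.card F : ℕ) : ZMod p) ^ ((p - 1) / 4) = 1 := by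
  classical
  have h4 : 4 ∣ p - 1 := (by norm_num : 4 ∣ 8).trans h8
  have h2' : 2 ∣ p - 1 := (by norm_num : 2 ∣ 8).trans h8
  let E := AlgebraicClosure F
  let ι : F →+* E := algebraMap F E
  obtain ⟨q, hcharF, m, hq, hcard⟩ := FiniteField.card' F
  have : Fact q.Prime := ⟨hq⟩
  have : CharP E q := charP_of_injective_algebraMap ι.injective q
  have h2E : (2 : E) ≠ 0 := by
    intro h; apply h2; apply ι.injective; rw [map_ofNat, map_zero]; exact h
  have hpE : (p : E) ≠ 0 := by
    intro h; apply hpF; apply ι.injective; rw [map_natCast, map_zero]; exact h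
  set N := Fintype.card F with hNdef
  have hNodd : N % 2 = 1 := by
    rw [hcard]
    rcases hq.eq_two_or_odd with h | h
    · subst h; exact absurd (CharP.cast_eq_zero F 2) (by exact_mod_cast h2)
    · rw [Nat.pow_mod, h]; simp
  -- the map to `E`
  obtain ⟨i, hi⟩ := IsAlgClosed.exists_pow_nat_eq (-1 : E) (n := 2) (by norm_num)
  let φ : GaussianInt →+* E := Zsqrtd.lift ⟨i, by rw [← pow_two, hi]; simp⟩
  have hφre : ∀ z : GaussianInt, φ z + φ (star z) = 2 * (z.re : E) := by
    intro z
    rw [← map_add]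
    have : z + star z = ((2 * z.re : ℤ) : GaussianInt) := by
      ext <;> simp; ring
    rw [this, map_intCast]; push_cast; ring
  have hi4 : IsPrimitiveRoot (⟨0, 1⟩ : GaussianInt) 4 := by
    rw [IsPrimitiveRoot.iff (by norm_num)]
    refine ⟨by decide, ?_⟩
    intro l h1 h2
    interval_cases l <;> decide
  let ξ : MulChar (ZMod p) E := χ.ringHomComp φ
  have hξ4 : ξ ^ 4 = 1 := by
    have : ξ ^ 4 = (χ ^ 4).ringHomComp φ := (MulChar.ringHomComp_pow χ φ 4)
    rw [this, ← hχ, pow_orderOf_eq_one]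
    apply MulChar.ext; intro u
    rw [MulChar.ringHomComp_apply]; simp
  have hpow : ∀ u : (ZMod p)ˣ, ξ u ^ 4 = 1 := fun u => by
    rw [← MulChar.pow_apply_coe, hξ4]; simp
  have hχg : ∃ g : (ZMod p)ˣ, χ g ^ 2 = -1 := by
    by_contra hcon
    push Not at hcon
    have : χ ^ 2 = 1 := by
      apply MulChar.ext; intro u
      rw [MulChar.pow_apply_coe, MulChar.one_apply_coe]
      have h1 : χ u ^ 4 = 1 := by rw [← MulChar.pow_apply_coe, ← hχ, pow_orderOf_eq_one]; simp
      have : (χ u ^ 2 - 1) * (χ u ^ 2 + 1) = 0 := by linear_combination h1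
      rcases mul_eq_zero.1 this with h | h
      · exact sub_eq_zero.1 h
      · exact absurd (eq_neg_of_add_eq_zero_left h) (hcon u)
    have := orderOf_dvd_of_pow_eq_one this
    rw [hχ] at this; norm_num at this
  obtain ⟨g, hg⟩ := hχg
  have hξg : ξ g ^ 2 = -1 := by
    change φ (χ g) ^ 2 = -1
    rw [← map_pow, hg]; simp
  have hneg1 : (1 : E) ≠ -1 := by
    intro h; apply h2E; linear_combination h
  have hξ2 : ξ ^ 2 ≠ 1 := by
    intro h
    have := MulChar.pow_apply_coe ξ 2 g
    rw [h, hξg] at this; simp at this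
    exact hneg1 this
  have hξ1 : ξ ≠ 1 := by intro h; apply hξ2; rw [h]; simp
  have hξord : orderOf ξ = 4 := by
    have := orderOf_eq_prime_pow (x := ξ) (p := 2) (n := 1) (by simpa using hξ2) (by simpa using hξ4)
    simpa using this
  have hξinv2 : ξ⁻¹ * ξ⁻¹ = ξ * ξ := by
    have h : ξ * ξ * (ξ * ξ) = 1 := by rw [← hξ4, pow_succ, pow_succ, pow_succ, pow_one]; group
    rw [← mul_inv, inv_eq_of_mul_eq_one_left h]
  have hξm1 : ξ (-1) = 1 := by
    obtain ⟨y, hy⟩ := neg_one_quartic p h8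
    rw [← hy, map_pow]
    have hyu : IsUnit y := IsUnit.of_pow_eq_one (n := 8) (by
      rw [show 8 = 4 * 2 by rfl, pow_mul, hy]; ring) (by norm_num)
    obtain ⟨u, rfl⟩ := hyu
    exact hpow u
  -- additive characters
  have : NeZero ((p : ℕ) : E) := ⟨hpE⟩
  have hp0 : p ≠ 0 := hp.out.ne_zero
  have : NeZero p := ⟨hp0⟩
  obtain ⟨ζ, hζ⟩ := HasEnoughRootsOfUnity.exists_primitiveRoot E p
  have key : ∀ ψ : AddChar (ZMod p) E, ψ.IsPrimitive → gaussSum (ξ * ξ) ψ = ι w →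
      ((N : ℕ) : ZMod p) ^ ((p - 1) / 4) = 1 := by
    intro ψ hψ hW
    have e1 : gaussSum ξ ψ * gaussSum ξ ψ = ι w * φ (jacobiSum χ χ) := by
      rw [← jacobiSum_mul_nontrivial (by rwa [← pow_two]), hW, jacobiSum_ringHomComp]
    have e2 : gaussSum ξ⁻¹ ψ * gaussSum ξ⁻¹ ψ = ι w * φ (star (jacobiSum χ χ)) := by
      rw [← jacobiSum_mul_nontrivial (by rwa [hξinv2, ← pow_two]), hξinv2, hW, ← hJ,
        ← jacobiSum_ringHomComp, MulChar.ringHomComp_inv]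
    have e3 : gaussSum ξ ψ * gaussSum ξ⁻¹ ψ = p := by
      rw [← mul_gaussSum_inv_eq_gaussSum ξ⁻¹ ψ, mul_left_comm, gaussSum_mul_gaussSum_eq_card hξ1 hψ,
        MulChar.inv_apply', inv_neg_one, hξm1, ZMod.card, one_mul]
    obtain ⟨R, hR⟩ : ∃ R, R = gaussSum ξ ψ + gaussSum ξ⁻¹ ψ := ⟨_, rfl⟩
    have hwE : ι w ^ 2 = (p : E) := by rw [← map_pow, hw, map_natCast]
    have hR2 : R ^ 2 = ι ρ ^ 2 := by
      rw [← map_pow, hρ, hR]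
      rw [map_mul, map_mul, map_add, map_intCast, map_ofNat]
      linear_combination e1 + e2 + 2 * e3 - 2 * hwE + (ι w) * hφre (jacobiSum χ χ)
    have hRN : R ^ N = R := by
      have hρN : ι ρ ^ N = ι ρ := by rw [← map_pow, FiniteField.pow_card]
      rcases sq_eq_sq_iff_eq_or_eq_neg.1 hR2 with h | h
      · rw [h, hρN]
      · rw [h, Odd.neg_pow (Nat.odd_iff.2 hNodd), hρN]
    have hR0 : R ≠ 0 := by
      intro h
      rw [h] at hR2
      have : ι ρ = 0 := by simpa using hR2.symm
      exact hρ0 ((map_eq_zero ι).1 this)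
    have hRsum : R = ∑ a, (ξ a + ξ⁻¹ a) * ψ a := by
      rw [hR, gaussSum, gaussSum, ← Finset.sum_add_distrib]
      exact Finset.sum_congr rfl (fun a _ => by ring)
    have hN0 : ((N : ℕ) : ZMod p) ≠ 0 := by
      intro h
      rw [h, zero_pow] at hN
      · exact zero_ne_one hN
      · have := hp.out.two_le; obtain ⟨d, hd⟩ := h2'; omega
    obtain ⟨v, hv⟩ : ∃ v : (ZMod p)ˣ, (v : ZMod p) = N := ⟨Units.mk0 _ hN0, rfl⟩
    have hvsq : ξ v * ξ v = 1 := by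
      obtain ⟨y, hy⟩ := exists_pow_of_pow_eq_one p 2 h2' (by norm_num) _ hN
      have hyu : IsUnit y := by
        rw [isUnit_iff_ne_zero]; rintro rfl; apply hN0; rw [← hy]; simp
      obtain ⟨u, rfl⟩ := hyu
      rw [hv, ← hy, map_pow, ← hpow u]; ring
    have hfrob : R ^ N = ∑ a, (ξ a + ξ⁻¹ a) * ψ (v * a) := by
      rw [hRsum, hcard, sum_pow_char_pow]
      apply Finset.sum_congr rfl
      intro a _
      rw [← hcard, mul_pow]
      congr 1
      · by_cases ha : IsUnit a
        · obtain ⟨u, rfl⟩ := ha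
          have h3 : ξ⁻¹ u = ξ u ^ 3 := by
            have : ξ⁻¹ = ξ ^ 3 := by
              rw [inv_eq_iff_mul_eq_one, ← hξ4]; group
            rw [this, MulChar.pow_apply_coe]
          rw [h3, hcard, add_pow_char_pow, ← hcard, ← pow_mul]
          have hmod : ∀ t : ℕ, ξ u ^ t = ξ u ^ (t % 4) := fun t => by
            conv_lhs => rw [← Nat.div_add_mod t 4, pow_add, pow_mul, hpow u, one_pow, one_mul]
          rw [hmod N, hmod (3 * N)]
          rcases (show N % 4 = 1 ∨ N % 4 = 3 by omega) with h | h
          · rw [h, show 3 * N % 4 = 3 by omega, pow_one]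
          · rw [h, show 3 * N % 4 = 1 by omega, pow_one, add_comm]
        · rw [MulChar.map_nonunit _ ha, MulChar.map_nonunit _ ha, add_zero, zero_pow]
          omega
      · rw [← AddChar.map_nsmul_eq_pow, nsmul_eq_mul, hv]
    have hsum : R ^ N = ξ v * R := by
      have hvinv : ξ⁻¹ (v : ZMod p) = ξ v := by
        have h3 : ξ⁻¹ = ξ ^ 3 := by
          rw [inv_eq_iff_mul_eq_one, ← hξ4]; group
        rw [h3, MulChar.pow_apply_coe]
        linear_combination (ξ v) * hvsq
      rw [hfrob, hRsum, Finset.mul_sum]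
      conv_rhs => rw [← Equiv.sum_comp v.mulLeft]
      apply Finset.sum_congr rfl
      intro a _
      change _ = ξ v * ((ξ (v * a) + ξ⁻¹ (v * a)) * ψ (v * a))
      rw [map_mul ξ, map_mul ξ⁻¹, hvinv]
      linear_combination (-(ξ a + ξ⁻¹ a) * ψ (v * a)) * hvsq
    have : ξ v = 1 := by
      rw [hRN] at hsum
      exact (mul_right_cancel₀ hR0 (by rw [one_mul]; exact hsum)).symm
    rw [← hv]
    exact char_one_imp p h4 ξ hξord v this
  let ψ := AddChar.zmodChar p hζ.pow_eq_one
  have hψ : ψ.IsPrimitive := AddChar.zmodChar_primitive_of_primitive_root p hζ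
  have hquad : (ξ * ξ).IsQuadratic := by
    intro a
    by_cases ha : IsUnit a
    · obtain ⟨u, rfl⟩ := ha
      right
      rw [MulChar.mul_apply]
      have : (ξ u * ξ u - 1) * (ξ u * ξ u + 1) = 0 := by linear_combination hpow u
      rcases mul_eq_zero.1 this with h | h
      · left; exact sub_eq_zero.1 h
      · right; exact eq_neg_of_add_eq_zero_left h
    · left; exact MulChar.map_nonunit _ ha
  have hW2 : gaussSum (ξ * ξ) ψ ^ 2 = ι w ^ 2 := by
    rw [gaussSum_sq (by rwa [← pow_two]) hquad hψ, ← map_pow, hw, map_natCast, MulChar.mul_apply, hξm1,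
      ZMod.card]; ring
  rcases sq_eq_sq_iff_eq_or_eq_neg.1 hW2 with h | h
  · exact key ψ hψ h
  · refine key (ψ.mulShift g) ?_ ?_
    · intro a ha
      rw [AddChar.mulShift_mulShift]
      exact hψ (mul_ne_zero g.ne_zero ha)
    · rw [gaussSum_mulShift_eq, h, hquad.inv, MulChar.mul_apply, ← pow_two, hξg]; ring
end PQ

namespace PQ

lemma neg_pell (p : ℕ) [hp : Fact p.Prime] (h4 : p % 4 = 1) : ∃ x y : ℤ, x ^ 2 - p * y ^ 2 = -1 := by
  have hp0 : (0 : ℤ) < p := by exact_mod_cast hp.out.pos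
  have hns : ¬ IsSquare (p : ℤ) := (Nat.prime_iff_prime_int.1 hp.out).irreducible.not_isSquare
  obtain ⟨a, ha⟩ := Pell.IsFundamental.exists_of_not_isSquare hp0 hns
  have hx1 : 1 < a.x := ha.1
  have hprop := a.prop
  have hmod : (p : ℤ) % 4 = 1 := by omega
  have hxo : a.x % 2 = 1 ∧ a.y % 2 = 0 := by
    obtain ⟨P, hP⟩ : ∃ P : ℤ, (p : ℤ) = 4 * P + 1 := ⟨p / 4, by omega⟩
    revert hprop
    generalize a.x = x
    generalize a.y = y
    intro hprop
    rw [hP] at hprop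
    rcases Int.even_or_odd' x with ⟨X, hX | hX⟩ <;> rcases Int.even_or_odd' y with ⟨Y, hY | hY⟩ <;>
      rw [hX, hY] at hprop ⊢
    · exfalso
      have : 4 * (X ^ 2 - (4 * P + 1) * Y ^ 2) = 1 := by linarith
      omega
    · exfalso
      have : 4 * (X ^ 2 - (4 * P + 1) * (Y ^ 2 + Y) - P) = 2 := by linarith
      omega
    · omega
    · exfalso
      have : 4 * (X ^ 2 + X - (4 * P + 1) * (Y ^ 2 + Y) - P) = 1 := by linarith
      omega
  obtain ⟨X, hX⟩ : ∃ X, a.x = 2 * X + 1 := ⟨a.x / 2, by omega⟩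
  obtain ⟨Y, hY⟩ : ∃ Y, a.y = 2 * Y := ⟨a.y / 2, by omega⟩
  have hX0 : 0 < X := by omega
  rw [hX, hY] at hprop
  have hXY : X * (X + 1) = p * Y ^ 2 := by linarith
  have hpp : Prime (p : ℤ) := Nat.prime_iff_prime_int.1 hp.out
  have hcop : IsCoprime X (X + 1) := ⟨-1, 1, by ring⟩
  rcases hpp.dvd_or_dvd (a := X) (b := X + 1) ⟨_, hXY⟩ with ⟨c, hc⟩ | ⟨c, hc⟩
  · exfalso
    have h1 : c * (X + 1) = Y ^ 2 := by
      apply mul_left_cancel₀ hp0.ne'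
      rw [← hXY, ← mul_assoc, ← hc]
    have hcc : IsCoprime c (X + 1) := by
      rw [hc] at hcop ⊢; exact hcop.of_mul_left_right
    have hc0 : 0 < c := by
      by_contra h
      have : (p : ℤ) * c ≤ 0 := mul_nonpos_of_nonneg_of_nonpos hp0.le (by omega)
      omega
    obtain ⟨f, hf⟩ := Int.sq_of_isCoprime hcc h1
    obtain ⟨e, he⟩ := Int.sq_of_isCoprime hcc.symm (by rw [mul_comm]; exact h1)
    have hf : c = f ^ 2 := by
      rcases hf with h | h
      · exact h
      · nlinarith [sq_nonneg f]
    have he : X + 1 = e ^ 2 := by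
      rcases he with h | h
      · exact h
      · nlinarith [sq_nonneg e]
    have hsol : |e| ^ 2 - p * f ^ 2 = 1 := by rw [sq_abs, ← he, ← hf, ← hc]; ring
    have he1 : 1 < |e| := by
      by_contra h
      have h0 := abs_nonneg e
      have : |e| ^ 2 ≤ 1 := by nlinarith
      rw [sq_abs] at this; omega
    have := ha.x_le_x (a := Pell.Solution₁.mk |e| f hsol) (by simpa using he1)
    rw [Pell.Solution₁.x_mk, hX] at this
    have h2 : |e| ^ 2 = X + 1 := by rw [sq_abs, he]
    nlinarith
  · have h1 : X * c = Y ^ 2 := by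
      apply mul_left_cancel₀ hp0.ne'
      rw [← hXY, hc]; ring
    have hcc : IsCoprime X c := by
      rw [hc] at hcop; exact hcop.of_mul_right_right
    have hc0 : 0 < c := by
      by_contra h
      have : (p : ℤ) * c ≤ 0 := mul_nonpos_of_nonneg_of_nonpos hp0.le (by omega)
      omega
    obtain ⟨f, hf⟩ := Int.sq_of_isCoprime hcc h1
    obtain ⟨e, he⟩ := Int.sq_of_isCoprime hcc.symm (by rw [mul_comm]; exact h1)
    have hf : X = f ^ 2 := by
      rcases hf with h | h
      · exact h
      · nlinarith [sq_nonneg f]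
    have he : c = e ^ 2 := by
      rcases he with h | h
      · exact h
      · nlinarith [sq_nonneg e]
    exact ⟨f, e, by rw [← hf, ← he, ← hc]; ring⟩

section ded
variable {R : Type*} [CommRing R] [IsDedekindDomain R]

lemma ideal_sq_dvd {A B : Ideal R} (h : A ^ 2 ∣ B ^ 2) : A ∣ B :=
  (UniqueFactorizationMonoid.pow_dvd_pow_iff_dvd (by norm_num)).1 h

lemma ideal_sq_inj {A B : Ideal R} (h : A ^ 2 = B ^ 2) : A = B :=
  dvd_antisymm (ideal_sq_dvd h.dvd) (ideal_sq_dvd h.symm.dvd)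

lemma elem_sq_dvd {a b : R} (h : a ^ 2 ∣ b ^ 2) : a ∣ b :=
  (IsIntegrallyClosed.pow_dvd_pow_iff (by norm_num)).1 h

lemma isSquare_of_mul_sq {t s a : R} (hs : s ≠ 0) (h : a ^ 2 = t * s ^ 2) : IsSquare t := by
  obtain ⟨b, rfl⟩ := elem_sq_dvd (a := s) (b := a) ⟨t, by rw [h]; ring⟩
  refine ⟨b, ?_⟩
  apply mul_right_cancel₀ (pow_ne_zero 2 hs)
  rw [← h]; ring

lemma span_sq (a : R) : Ideal.span {a} ^ 2 = Ideal.span {a ^ 2} := Ideal.span_singleton_pow a 2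

lemma span_mul (a b : R) : Ideal.span {a} * Ideal.span {b} = Ideal.span {a * b} :=
  Ideal.span_singleton_mul_span_singleton a b

/-- if `(a)² = D² (n)`-like relation `a^2 = t n`, `(t) = D²` then `(n)` is a square. -/
lemma ideal_sq_cofactor {A D N : Ideal R} (hD : D ≠ ⊥) (h : A ^ 2 = D ^ 2 * N) :
    ∃ E, A = D * E ∧ N = E ^ 2 := by
  obtain ⟨E, hE⟩ := ideal_sq_dvd (Dvd.intro N h.symm)
  refine ⟨E, hE, ?_⟩
  apply mul_left_cancel₀ (pow_ne_zero 2 hD)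
  rw [← h, hE, mul_pow]

lemma exists_prime_dvd_ideal {A : Ideal R} (hA : A ≠ ⊥) (h1 : A ≠ ⊤) :
    ∃ Q : Ideal R, Prime Q ∧ Q.IsPrime ∧ Q ∣ A := by
  obtain ⟨Q, hQ, hle⟩ := Ideal.exists_le_maximal A h1
  have hQ0 : Q ≠ ⊥ := by rintro rfl; exact hA (le_bot_iff.1 hle)
  exact ⟨Q, Ideal.prime_of_isPrime hQ0 hQ.isPrime, hQ.isPrime, Ideal.dvd_iff_le.2 hle⟩

end ded
end PQ

namespace PQ
universe u

/-- The data extracted from the tower `ℚ ⊂ ℚ(√p) ⊂ ℚ(⁴√p)`: `R`, `S` play the role of the rings of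
integers. -/
structure Tower (p : ℕ) (R S : Type u) [CommRing R] [IsDedekindDomain R] [Module.Free ℤ R]
    [CommRing S] [IsDedekindDomain S] [Module.Free ℤ S] [Algebra R S] where
  hmod : p % 16 = 1
  w : R
  r : S
  w_sq : w ^ 2 = (p : R)
  r_sq : r ^ 2 = algebraMap R S w
  τ : R ≃+* R
  σ : S ≃+* S
  τ_w : τ w = - w
  σ_r : σ r = - r
  τ_τ : ∀ x, τ (τ x) = x
  σ_σ : ∀ x, σ (σ x) = x
  σ_alg : ∀ x : R, σ (algebraMap R S x) = algebraMap R S x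
  τ_fix : ∀ x, τ x = x → ∃ n : ℤ, (n : R) = x
  σ_fix : ∀ x, σ x = x → ∃ y : R, algebraMap R S y = x
  inj : Function.Injective (algebraMap R S)
  normR' : ∀ A : Ideal R, A * A.map τ = Ideal.span {(A.absNorm : R)}
  absNorm_map : ∀ J : Ideal R, (J.map (algebraMap R S)).absNorm = J.absNorm ^ 2
  normS : ∀ A : Ideal S, ∃ B : Ideal R, B.map (algebraMap R S) = A * A.map σ
  ramR : ∀ (Q : Ideal R) (q : ℕ), Q.IsPrime → q.Prime → Q ^ 2 ∣ Ideal.span {(q : R)} →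
    ∀ z, z - τ z ∈ Q
  ramS : ∀ (Q : Ideal S) (q : Ideal R), Q.IsPrime → q.IsPrime → q ≠ ⊥ →
    Q ^ 2 ∣ q.map (algebraMap R S) → ∀ z, z - σ z ∈ Q
  φ : S →+* ℝ
  φ_r : 0 < φ r
  ω : R
  two_ω : 2 * ω = 1 + w
  g : S
  two_g : 2 * g = algebraMap R S ω * (r + 1)
  units : ¬ ∃ ε : Sˣ, ∀ s : Sˣ, ∃ t : Sˣ, s = t ^ 2 ∨ s = - t ^ 2 ∨ s = ε * t ^ 2 ∨ s = - (ε * t ^ 2)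

variable {p : ℕ} [hp : Fact p.Prime] {R S : Type u} [CommRing R] [IsDedekindDomain R] [Module.Free ℤ R]
    [Module.Finite ℤ R] [CharZero R] [CommRing S] [IsDedekindDomain S] [Module.Free ℤ S]
    [Module.Finite ℤ S] [CharZero S] [Algebra R S]

lemma exists_int_mul {A : Type*} [CommRing A] [IsDedekindDomain A] [Module.Free ℤ A]
    [Module.Finite ℤ A] [CharZero A] (x : A) (hx : x ≠ 0) : ∃ n : ℕ, n ≠ 0 ∧ x ∣ (n : A) := by
  refine ⟨Ideal.absNorm (Ideal.span {x}), ?_, ?_⟩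
  · rw [Ne, Ideal.absNorm_eq_zero_iff, Ideal.span_singleton_eq_bot]; exact hx
  · rw [← Ideal.mem_span_singleton]; exact Ideal.absNorm_mem _

lemma map_ne_zero_real {A : Type*} [CommRing A] [IsDedekindDomain A] [Module.Free ℤ A]
    [Module.Finite ℤ A] [CharZero A] (f : A →+* ℝ) (x : A) (hx : x ≠ 0) : f x ≠ 0 := by
  obtain ⟨n, hn, y, hy⟩ := exists_int_mul x hx
  intro h
  have := congrArg f hy
  rw [map_natCast, map_mul, h, zero_mul] at this
  exact hn (by exact_mod_cast this)

lemma absNorm_map_equiv {A : Type*} [CommRing A] [IsDedekindDomain A] [Module.Free ℤ A]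
    (e : A ≃+* A) (I : Ideal A) : (I.map e).absNorm = I.absNorm := by
  rw [Ideal.absNorm_apply, Ideal.absNorm_apply, Submodule.cardQuot_apply, Submodule.cardQuot_apply]
  exact (Nat.card_congr (Ideal.quotientEquiv I (I.map e) e rfl).toEquiv).symm

namespace Tower
variable (T : Tower p R S)

local notation "ι" => algebraMap R S

noncomputable def φ1 : R →+* ℝ := T.φ.comp ι
noncomputable def φ2 : R →+* ℝ := T.φ1.comp T.τ.toRingHom

lemma φ1_apply (x : R) : T.φ1 x = T.φ (ι x) := rfl
lemma φ2_apply (x : R) : T.φ2 x = T.φ1 (T.τ x) := rfl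
lemma φ2_τ (x : R) : T.φ2 (T.τ x) = T.φ1 x := by rw [φ2_apply, T.τ_τ]

lemma φ1_w : 0 < T.φ1 T.w := by
  rw [φ1_apply, ← T.r_sq, map_pow]; exact pow_pos T.φ_r 2
lemma φ2_w : T.φ2 T.w < 0 := by
  rw [φ2_apply, T.τ_w, map_neg]; linarith [T.φ1_w]

lemma w_ne : T.w ≠ 0 := by
  intro h; have := T.φ1_w; rw [h, map_zero] at this; exact lt_irrefl _ this
lemma r_ne : T.r ≠ 0 := by
  intro h; have := T.φ_r; rw [h, map_zero] at this; exact lt_irrefl _ this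

include T in
lemma alg_ne {x : R} (hx : x ≠ 0) : ι x ≠ 0 := (map_ne_zero_iff _ T.inj).2 hx

lemma trR (x : R) : ∃ n : ℤ, x + T.τ x = n := by
  obtain ⟨n, hn⟩ := T.τ_fix (x + T.τ x) (by rw [map_add, T.τ_τ, add_comm])
  exact ⟨n, hn.symm⟩
lemma nmR (x : R) : ∃ n : ℤ, x * T.τ x = n := by
  obtain ⟨n, hn⟩ := T.τ_fix (x * T.τ x) (by rw [map_mul, T.τ_τ, mul_comm])
  exact ⟨n, hn.symm⟩
lemma trS (x : S) : ∃ y : R, x + T.σ x = ι y := by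
  obtain ⟨n, hn⟩ := T.σ_fix (x + T.σ x) (by rw [map_add, T.σ_σ, add_comm])
  exact ⟨n, hn.symm⟩
lemma nmS (x : S) : ∃ y : R, x * T.σ x = ι y := by
  obtain ⟨n, hn⟩ := T.σ_fix (x * T.σ x) (by rw [map_mul, T.σ_σ, mul_comm])
  exact ⟨n, hn.symm⟩
lemma dfS (x : S) : ∃ y : R, (x - T.σ x) * T.r = ι y := by
  obtain ⟨n, hn⟩ := T.σ_fix ((x - T.σ x) * T.r) (by rw [map_mul, map_sub, T.σ_σ, T.σ_r]; ring)
  exact ⟨n, hn.symm⟩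

include T in
lemma int_dvd {n m : ℤ} (h : (n : R) ∣ (m : R)) : n ∣ m := by
  obtain ⟨t, ht⟩ := h
  by_cases hn : n = 0
  · subst hn
    rw [Int.cast_zero, zero_mul] at ht
    have : m = 0 := by exact_mod_cast ht
    simp [this]
  · have hnR : (n : R) ≠ 0 := by exact_mod_cast hn
    have h1 := congrArg T.τ ht
    rw [map_mul, map_intCast, map_intCast] at h1
    have h2 : T.τ t = t := mul_left_cancel₀ hnR (by rw [← h1, ht])
    obtain ⟨k, hk⟩ := T.τ_fix t h2
    refine ⟨k, ?_⟩
    rw [← hk] at ht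
    exact_mod_cast ht

include T in
lemma int_span_eq {n m : ℤ} (h : Ideal.span {(n : R)} = Ideal.span {(m : R)}) : n.natAbs = m.natAbs := by
  apply Nat.dvd_antisymm <;> rw [Int.natAbs_dvd_natAbs] <;> apply T.int_dvd <;>
    rw [← Ideal.mem_span_singleton]
  · rw [h]; exact Ideal.mem_span_singleton_self _
  · rw [← h]; exact Ideal.mem_span_singleton_self _

lemma map_τ_span (x : R) : (Ideal.span {x}).map T.τ = Ideal.span {T.τ x} := by
  rw [Ideal.map_span, Set.image_singleton]
lemma map_σ_span (x : S) : (Ideal.span {x}).map T.σ = Ideal.span {T.σ x} := by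
  rw [Ideal.map_span, Set.image_singleton]
lemma map_ι_span (x : R) : (Ideal.span {x}).map ι = Ideal.span {ι x} := by
  rw [Ideal.map_span, Set.image_singleton]

lemma normR {x : R} {n : ℤ} (h : x * T.τ x = n) : (Ideal.span {x}).absNorm = n.natAbs := by
  have h1 := T.normR' (Ideal.span {x})
  rw [map_τ_span, span_mul, h] at h1
  have := T.int_span_eq (m := ((Ideal.span {x}).absNorm : ℤ)) (by rw [h1]; simp)
  rw [Int.natAbs_natCast] at this
  exact this.symm

lemma absNorm_of_map {A : Ideal S} {B : Ideal R} (h : B.map ι = A * A.map T.σ) :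
    B.absNorm = A.absNorm := by
  have h1 := congrArg Ideal.absNorm h
  rw [T.absNorm_map, map_mul, absNorm_map_equiv, ← pow_two] at h1
  exact Nat.pow_left_injective (n := 2) (by norm_num) h1

lemma normS_elem {α : S} {b : R} {n : ℤ} (h : α * T.σ α = ι b) (hb : b * T.τ b = n) :
    (Ideal.span {α}).absNorm = n.natAbs := by
  rw [← T.normR hb]
  symm
  apply T.absNorm_of_map
  rw [map_σ_span, span_mul, map_ι_span, h]

lemma absNorm_w : (Ideal.span {T.w}).absNorm = p := by
  rw [T.normR (n := -(p : ℤ)) (by rw [T.τ_w]; push_cast; rw [← T.w_sq]; ring)]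
  simp

lemma absNorm_r : (Ideal.span {T.r}).absNorm = p := by
  refine Eq.trans ?_ T.absNorm_w
  symm
  apply T.absNorm_of_map
  rw [map_σ_span, span_mul, map_ι_span, T.σ_r, ← T.r_sq, mul_neg, Ideal.span_singleton_neg, pow_two]

lemma exists_rho : ∃ ρ : S →+* ZMod p, ∀ x, ρ x = 0 ↔ T.r ∣ x := by
  have hc : Nat.card (S ⧸ Ideal.span {T.r}) = p := by
    have := T.absNorm_r
    rwa [Ideal.absNorm_apply, Submodule.cardQuot_apply] at this
  have : Finite (S ⧸ Ideal.span {T.r}) := Nat.finite_of_card_ne_zero (by rw [hc]; exact hp.out.ne_zero)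
  have : Fintype (S ⧸ Ideal.span {T.r}) := Fintype.ofFinite _
  rw [Nat.card_eq_fintype_card] at hc
  let e := ZMod.ringEquivOfPrime _ hp.out hc
  refine ⟨e.symm.toRingHom.comp (Ideal.Quotient.mk _), fun x => ?_⟩
  rw [← Ideal.mem_span_singleton, ← Ideal.Quotient.eq_zero_iff_mem]
  exact map_eq_zero_iff e.symm e.symm.injective

/-- reduction modulo `r` -/
noncomputable def ρ : S →+* ZMod p := T.exists_rho.choose
lemma ρ_zero (x : S) : T.ρ x = 0 ↔ T.r ∣ x := T.exists_rho.choose_spec x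

lemma ρ_σ (x : S) : T.ρ (T.σ x) = T.ρ x := by
  obtain ⟨n, hn⟩ := ZMod.intCast_surjective (T.ρ x)
  obtain ⟨t, ht⟩ := (T.ρ_zero (x - n)).1 (by rw [map_sub, map_intCast, hn, sub_self])
  have : T.σ x = n - T.r * T.σ t := by
    have := congrArg T.σ ht
    rw [map_sub, map_mul, map_intCast, T.σ_r] at this
    linear_combination this
  rw [this, map_sub, map_mul, (T.ρ_zero T.r).2 dvd_rfl, map_intCast, hn]; ring

noncomputable def ρk : R →+* ZMod p := T.ρ.comp ι
lemma ρk_apply (x : R) : T.ρk x = T.ρ (ι x) := rfl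

lemma τ_diff (x : R) : ∃ t : ℤ, x - T.τ x = T.w * t := by
  obtain ⟨n, hn⟩ := T.τ_fix ((x - T.τ x) * T.w) (by rw [map_mul, map_sub, T.τ_τ, T.τ_w]; ring)
  obtain ⟨d, hd⟩ := T.τ_fix ((x - T.τ x) ^ 2) (by rw [map_pow, map_sub, T.τ_τ]; ring)
  have h1 : ((n ^ 2 : ℤ) : R) = ((p * d : ℤ) : R) := by
    push_cast; rw [hn, hd, ← T.w_sq]; ring
  have h2 : n ^ 2 = p * d := by exact_mod_cast h1
  have hpp : Prime (p : ℤ) := Nat.prime_iff_prime_int.1 hp.out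
  obtain ⟨t, rfl⟩ := hpp.dvd_of_dvd_pow (Dvd.intro _ h2.symm)
  refine ⟨t, mul_right_cancel₀ T.w_ne ?_⟩
  rw [← hn]; push_cast; rw [← T.w_sq]; ring

lemma ρk_w : T.ρk T.w = 0 := by
  rw [ρk_apply, ρ_zero, ← T.r_sq]; exact dvd_pow_self _ two_ne_zero

lemma ρk_τ (x : R) : T.ρk (T.τ x) = T.ρk x := by
  obtain ⟨t, ht⟩ := T.τ_diff x
  have := congrArg T.ρk ht
  rw [map_sub, map_mul, ρk_w, zero_mul] at this
  linear_combination -this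

end Tower
end PQ

namespace PQ
universe u
variable {p : ℕ} [hp : Fact p.Prime] {R S : Type u} [CommRing R] [IsDedekindDomain R] [Module.Free ℤ R]
    [Module.Finite ℤ R] [CharZero R] [CommRing S] [IsDedekindDomain S] [Module.Free ℤ S]
    [Module.Finite ℤ S] [CharZero S] [Algebra R S]
namespace Tower
variable (T : Tower p R S)
local notation "ι" => algebraMap R S

lemma p_in_prime {Q : Ideal R} (hQ : Q.IsPrime) {q : ℕ} (hq : q.Prime) (h : (q : R) ∈ Q)
    (hw : T.w ∈ Q) : q = p := by
  by_contra hne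
  have hc : IsCoprime (q : ℤ) (p : ℤ) := Nat.isCoprime_iff_coprime.2 ((Nat.coprime_primes hq hp.out).2 hne)
  obtain ⟨a, b, hab⟩ := hc
  apply hQ.ne_top
  rw [Ideal.eq_top_iff_one]
  have h1 : ((a * q + b * p : ℤ) : R) = 1 := by rw [hab]; simp
  rw [← h1]
  push_cast
  rw [← T.w_sq]
  exact Q.add_mem (Q.mul_mem_left _ h) (Q.mul_mem_left _ (Ideal.pow_mem_of_mem Q hw 2 (by norm_num)))

lemma ω_diff : T.ω - T.τ T.ω = T.w := by
  have h := congrArg T.τ T.two_ω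
  rw [map_mul, map_add, map_ofNat, map_one, T.τ_w] at h
  apply mul_left_cancel₀ (two_ne_zero (α := R))
  linear_combination T.two_ω - h

include T in
lemma nat_sq (n : ℕ) : n ≠ 0 → ∀ E : Ideal R, Ideal.span {(n : R)} = E ^ 2 → IsSquare (n : R) := by
  induction n using Nat.strong_induction_on with
  | _ n ih =>
  intro hn E hE
  by_cases h1 : n = 1
  · subst h1; simp
  obtain ⟨q, hq, n', rfl⟩ := Nat.exists_prime_and_dvd h1
  have hn' : n' ≠ 0 := by rintro rfl; simp at hn
  have hqR : (q : R) ≠ 0 := by exact_mod_cast hq.ne_zero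
  by_cases hqn : q ∣ n'
  · obtain ⟨m, rfl⟩ := hqn
    have hm : m ≠ 0 := by rintro rfl; simp at hn
    obtain ⟨E', -, hE'⟩ := ideal_sq_cofactor (A := E) (D := Ideal.span {(q : R)}) (N := Ideal.span {(m : R)})
      (by simpa using hqR) (by rw [← hE, span_sq, span_mul]; push_cast; ring_nf)
    obtain ⟨s, hs⟩ := ih m (by
      have := hq.two_le; have : 0 < m := Nat.pos_of_ne_zero hm
      nlinarith [Nat.mul_pos hq.pos this]) hm E' hE'
    exact ⟨q * s, by push_cast; rw [hs]; ring⟩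
  · have hqt : Ideal.span {(q : R)} ≠ ⊤ := by
      intro h
      rw [Ideal.span_singleton_eq_top, isUnit_iff_dvd_one] at h
      have := T.int_dvd (n := q) (m := 1) (by simpa using h)
      have h2 : q ∣ 1 := by exact_mod_cast this
      exact hq.one_lt.ne' (Nat.dvd_one.1 h2)
    obtain ⟨Q, hQp, hQ, hQq⟩ := exists_prime_dvd_ideal (A := Ideal.span {(q : R)}) (by simpa using hqR) hqt
    have hqQ : (q : R) ∈ Q := by
      rw [← Ideal.span_singleton_le_iff_mem, ← Ideal.dvd_iff_le]; exact hQq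
    have hQE : Q ∣ E := by
      apply hQp.dvd_of_dvd_pow (n := 2)
      rw [← hE, Nat.cast_mul, ← span_mul]
      exact hQq.mul_right _
    have hn'Q : ¬ Q ∣ Ideal.span {(n' : R)} := by
      intro h
      have hmem : (n' : R) ∈ Q := by
        rw [← Ideal.span_singleton_le_iff_mem, ← Ideal.dvd_iff_le]; exact h
      have hc : IsCoprime (q : ℤ) (n' : ℤ) := Nat.isCoprime_iff_coprime.2 ((Nat.Prime.coprime_iff_not_dvd hq).2 hqn)
      obtain ⟨a, b, hab⟩ := hc
      apply hQ.ne_top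
      rw [Ideal.eq_top_iff_one]
      have h1 : ((a * q + b * n' : ℤ) : R) = 1 := by rw [hab]; simp
      rw [← h1]
      push_cast
      exact Q.add_mem (Q.mul_mem_left _ hqQ) (Q.mul_mem_left _ hmem)
    have hQ2 : Q ^ 2 ∣ Ideal.span {(q : R)} := by
      apply hQp.pow_dvd_of_dvd_mul_right 2 hn'Q
      rw [span_mul, ← Nat.cast_mul, hE]
      exact pow_dvd_pow_of_dvd hQE 2
    have hw : T.w ∈ Q := by
      have := T.ramR Q q hQ hq hQ2 T.ω
      rwa [T.ω_diff] at this
    have hqp := T.p_in_prime hQ hq hqQ hw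
    subst hqp
    obtain ⟨E', -, hE'⟩ := ideal_sq_cofactor (A := E) (D := Ideal.span {T.w}) (N := Ideal.span {(n' : R)})
      (by simpa using T.w_ne) (by rw [← hE, span_sq, span_mul, T.w_sq]; push_cast; ring_nf)
    obtain ⟨s, hs⟩ := ih n' (by
      have := hq.two_le; have : 0 < n' := Nat.pos_of_ne_zero hn'
      nlinarith) hn' E' hE'
    exact ⟨T.w * s, by push_cast; rw [hs, ← T.w_sq]; ring⟩

/-- Lemma U, on units. -/
lemma isSquare_of_pos {t : R} {m : ℤ} (hm : m ≠ 0) (hpos : 0 < T.φ2 t) (hN : t * T.τ t = ((m ^ 2 : ℤ) : R))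
    {D : Ideal R} (hD : Ideal.span {t} = D ^ 2) : IsSquare t := by
  wlog hm0 : 0 < m generalizing m
  · exact this (m := -m) (by omega) (by rw [hN]; push_cast; ring) (by omega)
  have ht0 : t ≠ 0 := by rintro rfl; simp at hpos
  obtain ⟨n, hn⟩ := T.trR t
  have h1 : 0 < T.φ1 t := by
    have := congrArg T.φ1 hN
    rw [map_mul, map_intCast, ← φ2_apply] at this
    have h2 : (0 : ℝ) < ((m ^ 2 : ℤ) : ℝ) := by exact_mod_cast pow_pos hm0 2
    rw [← this] at h2
    exact pos_of_mul_pos_left h2 hpos.le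
  have hnpos : 0 < n := by
    have := congrArg T.φ1 hn
    rw [map_add, map_intCast, ← φ2_apply] at this
    have : (0 : ℝ) < n := by linarith
    exact_mod_cast this
  obtain ⟨k, hk⟩ : ∃ k : ℕ, n + 2 * m = k := ⟨(n + 2 * m).toNat, by omega⟩
  have hk0 : k ≠ 0 := by omega
  have hkR : (k : R) = t + T.τ t + 2 * m := by
    rw [hn]
    have : ((n + 2 * m : ℤ) : R) = ((k : ℤ) : R) := by rw [hk]
    push_cast at this; rw [← this]
  have hsq : (t + m) ^ 2 = t * k := by
    push_cast at hN
    rw [hkR]; linear_combination -hN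
  obtain ⟨E, -, hE⟩ := ideal_sq_cofactor (A := Ideal.span {t + (m : R)}) (D := D) (N := Ideal.span {(k : R)})
    (by rintro rfl; rw [Ideal.bot_pow two_ne_zero, Ideal.span_singleton_eq_bot] at hD; exact ht0 hD)
    (by rw [span_sq, hsq, ← span_mul, hD])
  obtain ⟨s, hs⟩ := T.nat_sq k hk0 E hE
  refine isSquare_of_mul_sq (t := t) (s := s) (a := t + m) ?_ ?_
  · rintro rfl
    rw [mul_zero] at hs; exact hk0 (by exact_mod_cast hs)
  · rw [hsq, hs]; ring

lemma exists_eps : ∃ e : R, e * T.τ e = -1 := by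
  obtain ⟨x, y, h⟩ := neg_pell p (by have := T.hmod; omega)
  refine ⟨x + y * T.w, ?_⟩
  rw [map_add, map_mul, map_intCast, map_intCast, T.τ_w]
  have : ((x ^ 2 - p * y ^ 2 : ℤ) : R) = ((-1 : ℤ) : R) := by rw [h]
  push_cast at this
  rw [← T.w_sq] at this
  linear_combination this

lemma unit_of_norm {e : R} {n : ℤ} (h : e * T.τ e = n) (hn : n = 1 ∨ n = -1) : IsUnit e := by
  rw [isUnit_iff_dvd_one]
  rcases hn with rfl | rfl
  · exact ⟨T.τ e, by rw [h]; simp⟩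
  · exact ⟨- T.τ e, by rw [mul_neg, h]; simp⟩

lemma norm_unit {e : R} (he : IsUnit e) : e * T.τ e = 1 ∨ e * T.τ e = -1 := by
  obtain ⟨n, hn⟩ := T.nmR e
  have h1 : (n : R) ∣ ((1 : ℤ) : R) := by
    rw [← hn]
    have : IsUnit (e * T.τ e) := he.mul (he.map T.τ)
    exact this.dvd
  have := T.int_dvd h1
  rcases Int.isUnit_iff.1 (isUnit_iff_dvd_one.2 this) with h | h
  · left; rw [hn, h]; simp
  · right; rw [hn, h]; simp

lemma unit_sq {u : R} (hu : u * T.τ u = 1) (hpos : 0 < T.φ2 u) : IsSquare u := by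
  apply T.isSquare_of_pos (m := 1) one_ne_zero hpos (by rw [hu]; simp) (D := ⊤)
  rw [← Ideal.one_eq_top, one_pow, Ideal.one_eq_top, Ideal.span_singleton_eq_top]
  exact T.unit_of_norm (n := 1) (by rw [hu]; simp) (Or.inl rfl)

include T in
lemma odd_classR [Finite (ClassGroup R)] : Odd (Nat.card (ClassGroup R)) := by
  rw [← Nat.not_even_iff_odd, even_iff_two_dvd]
  intro h2
  obtain ⟨c, hc⟩ := exists_prime_orderOf_dvd_card' 2 h2
  obtain ⟨⟨A, hA⟩, rfl⟩ := ClassGroup.mk0_surjective c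
  have hA0 : A ≠ ⊥ := by simpa using hA
  have hsq : ClassGroup.mk0 ⟨A, hA⟩ ^ 2 = 1 := by rw [← hc, pow_orderOf_eq_one]
  have hne : ClassGroup.mk0 ⟨A, hA⟩ ≠ 1 := by intro h; rw [h] at hc; simp at hc
  rw [← map_pow, ClassGroup.mk0_eq_one_iff] at hsq
  obtain ⟨γ, hγ⟩ := hsq.principal
  have hγ : A ^ 2 = Ideal.span {γ} := hγ
  have hγ0 : γ ≠ 0 := by
    rintro rfl
    rw [Ideal.span_singleton_zero] at hγ
    exact hA0 (pow_eq_zero_iff two_ne_zero |>.1 hγ)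
  set n := A.absNorm with hn
  have hn0 : n ≠ 0 := by rw [hn, Ne, Ideal.absNorm_eq_zero_iff]; exact hA0
  -- adjust
  have key : ∃ γ', A ^ 2 = Ideal.span {γ'} ∧ γ' * T.τ γ' = (((n : ℤ) ^ 2 : ℤ) : R) ∧ 0 < T.φ2 γ' := by
    have k1 : ∃ γ', A ^ 2 = Ideal.span {γ'} ∧ γ' * T.τ γ' = (((n : ℤ) ^ 2 : ℤ) : R) := by
      obtain ⟨N, hN⟩ := T.nmR γ
      have h1 := T.normR hN
      rw [← hγ, map_pow, ← hn] at h1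
      rcases Int.natAbs_eq N with h | h
      · refine ⟨γ, hγ, ?_⟩
        rw [hN, h, ← h1]; push_cast; rfl
      · obtain ⟨e, he⟩ := T.exists_eps
        refine ⟨γ * e, ?_, ?_⟩
        · rw [hγ, Ideal.span_singleton_mul_right_unit (T.unit_of_norm (n := -1) (by rw [he]; simp) (Or.inr rfl))]
        · rw [map_mul, mul_mul_mul_comm, hN, he, h, ← h1]; push_cast; ring
    obtain ⟨γ', h1, h2⟩ := k1
    have hγ0' : γ' ≠ 0 := by
      rintro rfl
      rw [Ideal.span_singleton_zero] at h1
      exact hA0 (pow_eq_zero_iff two_ne_zero |>.1 h1)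
    rcases lt_or_gt_of_ne (map_ne_zero_real T.φ2 γ' hγ0') with h | h
    · exact ⟨-γ', by rw [h1, Ideal.span_singleton_neg], by rw [map_neg, neg_mul_neg, h2], by rw [map_neg]; linarith⟩
    · exact ⟨γ', h1, h2, h⟩
  obtain ⟨γ', h1, h2, h3⟩ := key
  obtain ⟨s, hs⟩ := T.isSquare_of_pos (m := n) (by exact_mod_cast hn0) h3 h2 h1.symm
  rw [hs, ← pow_two, ← span_sq] at h1
  have := ideal_sq_inj h1
  apply hne
  rw [ClassGroup.mk0_eq_one_iff]
  exact ⟨⟨s, this⟩⟩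

variable [Finite (ClassGroup R)]

include T in
/-- an odd exponent making every ideal of `R` principal -/
lemma exists_h : ∃ h : ℕ, Odd h ∧ ∀ C : Ideal R, C ≠ ⊥ → ∃ d : R, d ≠ 0 ∧ C ^ h = Ideal.span {d} := by
  refine ⟨Nat.card (ClassGroup R), T.odd_classR, fun C hC => ?_⟩
  have h1 : ClassGroup.mk0 ⟨C, mem_nonZeroDivisors_of_ne_zero hC⟩ ^ Nat.card (ClassGroup R) = 1 := pow_card_eq_one'
  rw [← map_pow, ClassGroup.mk0_eq_one_iff] at h1
  obtain ⟨γ, hγ⟩ := h1.principal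
  have hγ : C ^ Nat.card (ClassGroup R) = Ideal.span {γ} := hγ
  refine ⟨γ, ?_, hγ⟩
  rintro rfl
  rw [Ideal.span_singleton_zero] at hγ
  exact hC (pow_eq_zero_iff (Nat.card_pos.ne') |>.1 hγ)

end Tower
end PQ

namespace PQ
universe u
variable {p : ℕ} [hp : Fact p.Prime] {R S : Type u} [CommRing R] [IsDedekindDomain R] [Module.Free ℤ R]
    [Module.Finite ℤ R] [CharZero R] [CommRing S] [IsDedekindDomain S] [Module.Free ℤ S]
    [Module.Finite ℤ S] [CharZero S] [Algebra R S]

/-- the quartic character of the prime-to-`p` part of the norm -/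
noncomputable def chi (p : ℕ) (A : Ideal S) : ZMod p := ((ordCompl[p] A.absNorm : ℕ) : ZMod p) ^ ((p - 1) / 4)

omit [Module.Finite ℤ S] [CharZero S] in
lemma chi_mul (A B : Ideal S) : chi p (A * B) = chi p A * chi p B := by
  unfold chi
  rw [map_mul, Nat.ordCompl_mul, Nat.cast_mul, mul_pow]

omit [Module.Finite ℤ S] [CharZero S] in
lemma chi_one : chi p (1 : Ideal S) = 1 := by
  unfold chi
  rw [map_one]; simp

omit [Module.Finite ℤ S] [CharZero S] in
lemma chi_pow (A : Ideal S) (n : ℕ) : chi p (A ^ n) = chi p A ^ n := by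
  induction n with
  | zero => rw [pow_zero, pow_zero, chi_one]
  | succ n ih => rw [pow_succ, chi_mul, ih, pow_succ]

lemma base_ne (A : Ideal S) (hA : A ≠ ⊥) : ((ordCompl[p] A.absNorm : ℕ) : ZMod p) ≠ 0 := by
  rw [Ne, ZMod.natCast_eq_zero_iff]
  exact Nat.not_dvd_ordCompl hp.out (by rw [Ne, Ideal.absNorm_eq_zero_iff]; exact hA)

lemma chi_ne_zero (A : Ideal S) (hA : A ≠ ⊥) : chi p A ≠ 0 := pow_ne_zero _ (base_ne A hA)

lemma chi_coprime (A : Ideal S) (hA : ¬ p ∣ A.absNorm) :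
    chi p A = (A.absNorm : ZMod p) ^ ((p - 1) / 4) := by
  unfold chi
  rw [Nat.factorization_eq_zero_of_not_dvd hA, pow_zero, Nat.div_one]

lemma eq_one_of_odd_pow {M : Type*} [Monoid M] {x : M} {h : ℕ} (h4 : x ^ 4 = 1) (ho : Odd h) (hx : x ^ h = 1) : x = 1 := by
  have h1 := orderOf_dvd_of_pow_eq_one h4
  have h2 := orderOf_dvd_of_pow_eq_one hx
  have hc : Nat.Coprime 4 h := by
    have : Nat.Coprime (2 ^ 2) h := Nat.Coprime.pow_left 2 (Nat.coprime_two_left.2 ho)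
    simpa using this
  have h3 := Nat.dvd_gcd h1 h2
  rw [hc] at h3
  exact orderOf_eq_one_iff.1 (Nat.dvd_one.1 h3)

namespace Tower
variable (T : Tower p R S)
include T
local notation "ι" => algebraMap R S

lemma pm1 : ∃ m, p - 1 = 16 * m ∧ 0 < m ∧ p = 16 * m + 1 := by
  have := T.hmod
  have := hp.out.two_le
  exact ⟨p / 16, by omega, by omega, by omega⟩

lemma quartic_of_pow {y : ZMod p} (hy : y ≠ 0) : (y ^ 4) ^ ((p - 1) / 4) = 1 := by
  obtain ⟨m, hm, -, -⟩ := T.pm1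
  rw [← pow_mul, hm, show 4 * (16 * m / 4) = 16 * m by omega, ← hm]
  exact ZMod.pow_card_sub_one_eq_one hy

lemma neg_one_q : (-1 : ZMod p) ^ ((p - 1) / 4) = 1 := by
  obtain ⟨m, hm, -, -⟩ := T.pm1
  rw [hm, show 16 * m / 4 = 2 * (2 * m) by omega, pow_mul]; simp

lemma chi_four (A : Ideal S) (hA : A ≠ ⊥) : chi p A ^ 4 = 1 := by
  unfold chi
  rw [← pow_mul, mul_comm, pow_mul]
  exact T.quartic_of_pow (base_ne A hA)

lemma natAbs_q (n : ℤ) : ((n.natAbs : ℕ) : ZMod p) ^ ((p - 1) / 4) = (n : ZMod p) ^ ((p - 1) / 4) := by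
  rcases Int.natAbs_eq n with h | h
  · conv_rhs => rw [h]
    simp
  · conv_rhs => rw [h]
    rw [Int.cast_neg, ← neg_one_mul, mul_pow, T.neg_one_q, one_mul]
    simp

lemma r_prime : Prime T.r := by
  rw [← Ideal.span_singleton_prime T.r_ne]
  apply Ideal.isPrime_of_irreducible_absNorm
  rw [T.absNorm_r]
  exact hp.out

/-- norm of an element not divisible by `r` -/
lemma absNorm_coprime {α : S} (hα : ¬ T.r ∣ α) : ∃ n : ℤ, (Ideal.span {α}).absNorm = n.natAbs ∧
    (n : ZMod p) = T.ρ α ^ 4 ∧ T.ρ α ≠ 0 := by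
  obtain ⟨b, hb⟩ := T.nmS α
  obtain ⟨n, hn⟩ := T.nmR b
  refine ⟨n, T.normS_elem hb hn, ?_, fun h => hα ((T.ρ_zero α).1 h)⟩
  have h1 := congrArg T.ρ hb
  have h2 := congrArg T.ρk hn
  rw [map_mul, T.ρ_σ, ← ρk_apply] at h1
  rw [map_mul, T.ρk_τ, map_intCast, ← h1] at h2
  rw [← h2]; ring

lemma chi_span (α : S) (hα : α ≠ 0) : chi p (Ideal.span {α}) = 1 := by
  obtain ⟨α', hαe, hα'⟩ := (FiniteMultiplicity.of_prime_left T.r_prime hα).exists_eq_pow_mul_and_not_dvd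
  rw [hαe, ← span_mul, ← Ideal.span_singleton_pow, chi_mul, chi_pow]
  have h1 : chi p (Ideal.span {T.r}) = 1 := by
    unfold chi
    rw [T.absNorm_r, hp.out.factorization_self, pow_one, Nat.div_self hp.out.pos]; simp
  rw [h1, one_pow, one_mul]
  obtain ⟨n, hn, hn2, hn3⟩ := T.absNorm_coprime hα'
  rw [chi_coprime, hn, T.natAbs_q, hn2]
  · exact T.quartic_of_pow hn3
  · rw [hn, ← ZMod.natCast_eq_zero_iff]
    intro h
    have h5 : (n : ZMod p) = 0 := by
      rw [ZMod.intCast_zmod_eq_zero_iff_dvd]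
      rw [ZMod.natCast_eq_zero_iff] at h
      exact Int.natCast_dvd.2 h
    rw [hn2] at h5
    exact hn3 (pow_eq_zero_iff (by norm_num) |>.1 h5)

lemma map_ne_bot {C : Ideal R} (hC : C ≠ ⊥) : C.map ι ≠ ⊥ := by
  rw [Ne, Ideal.map_eq_bot_iff_of_injective T.inj]; exact hC

lemma chi_map [Finite (ClassGroup R)] (C : Ideal R) (hC : C ≠ ⊥) : chi p (C.map ι) = 1 := by
  obtain ⟨h, ho, hh⟩ := T.exists_h
  obtain ⟨d, hd0, hd⟩ := hh C hC
  apply eq_one_of_odd_pow (T.chi_four _ (T.map_ne_bot hC)) ho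
  rw [← chi_pow, ← Ideal.map_pow, hd, map_ι_span]
  exact T.chi_span _ (T.alg_ne hd0)

lemma chi_sq [Finite (ClassGroup R)] (A : Ideal S) (hA : A ≠ ⊥) : chi p A ^ 2 = 1 := by
  obtain ⟨B, hB⟩ := T.normS A
  have hB0 : B ≠ ⊥ := by
    rintro rfl
    rw [Ideal.map_bot] at hB
    rcases mul_eq_zero.1 hB.symm with h | h
    · exact hA h
    · exact hA ((Ideal.map_eq_bot_iff_of_injective T.σ.injective).1 h)
  have h1 := T.chi_map B hB0
  rw [hB, chi_mul] at h1
  rw [pow_two, ← h1]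
  congr 1
  unfold chi
  rw [absNorm_map_equiv]

lemma chi_class {A B : Ideal S} (hA : A ∈ nonZeroDivisors (Ideal S)) (hB : B ∈ nonZeroDivisors (Ideal S))
    (h : ClassGroup.mk0 ⟨A, hA⟩ = ClassGroup.mk0 ⟨B, hB⟩) : chi p A = chi p B := by
  rw [ClassGroup.mk0_eq_mk0_iff] at h
  obtain ⟨x, y, hx, hy, hxy⟩ := h
  have := congrArg (chi p) hxy
  rwa [chi_mul, chi_mul, T.chi_span x hx, T.chi_span y hy, one_mul, one_mul] at this

/-- `chi` on the class group -/
noncomputable def chiC : ClassGroup S →* ZMod p where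
  toFun c := chi p ((ClassGroup.mk0_surjective c).choose : Ideal S)
  map_one' := by
    rw [← chi_one (p := p) (S := S)]
    have h := (ClassGroup.mk0_surjective (1 : ClassGroup S)).choose_spec
    apply T.chi_class (SetLike.coe_mem _) (one_mem _)
    rw [show (⟨1, one_mem _⟩ : nonZeroDivisors (Ideal S)) = 1 from rfl, map_one]
    exact h
  map_mul' c d := by
    rw [← chi_mul]
    apply T.chi_class (SetLike.coe_mem _) (mul_mem (SetLike.coe_mem _) (SetLike.coe_mem _))
    have h := (ClassGroup.mk0_surjective (c * d : ClassGroup S)).choose_spec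
    have hc := (ClassGroup.mk0_surjective (c : ClassGroup S)).choose_spec
    have hd := (ClassGroup.mk0_surjective (d : ClassGroup S)).choose_spec
    refine Eq.trans h (Eq.trans ?_ (map_mul ClassGroup.mk0 _ _).symm)
    rw [hc, hd]

lemma chiC_mk0 (A : nonZeroDivisors (Ideal S)) : T.chiC (ClassGroup.mk0 A) = chi p (A : Ideal S) := by
  apply T.chi_class (SetLike.coe_mem _) (SetLike.coe_mem _)
  exact (ClassGroup.mk0_surjective (ClassGroup.mk0 A : ClassGroup S)).choose_spec

lemma chiC_sq [Finite (ClassGroup R)] (c : ClassGroup S) : T.chiC c = 1 ∨ T.chiC c = -1 := by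
  obtain ⟨A, rfl⟩ := ClassGroup.mk0_surjective c
  rw [chiC_mk0]
  have := T.chi_sq A (nonZeroDivisors.coe_ne_zero A)
  have h2 : (chi p (A : Ideal S) - 1) * (chi p (A : Ideal S) + 1) = 0 := by linear_combination this
  rcases mul_eq_zero.1 h2 with h | h
  · left; exact sub_eq_zero.1 h
  · right; exact eq_neg_of_add_eq_zero_left h

end Tower
end PQ

namespace PQ
universe u
variable {p : ℕ} [hp : Fact p.Prime] {R S : Type u} [CommRing R] [IsDedekindDomain R] [Module.Free ℤ R]
    [Module.Finite ℤ R] [CharZero R] [CommRing S] [IsDedekindDomain S] [Module.Free ℤ S]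
    [Module.Finite ℤ S] [CharZero S] [Algebra R S]

namespace Tower
variable (T : Tower p R S)
include T
local notation "ι" => algebraMap R S

lemma basis_ω (x : R) : ∃ a t : ℤ, x = a + t * T.ω := by
  obtain ⟨t, ht⟩ := T.τ_diff x
  obtain ⟨a, ha⟩ := T.τ_fix (x - t * T.ω) (by
    rw [map_sub, map_mul, map_intCast]
    linear_combination (t : R) * T.ω_diff - ht)
  exact ⟨a, t, by rw [ha]; ring⟩

/-- the ramified prime above 2 -/
def ell : Ideal R := Ideal.span {2, T.ω}

lemma two_mem_ell : (2 : R) ∈ T.ell := Ideal.subset_span (by simp)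
lemma ω_mem_ell : T.ω ∈ T.ell := Ideal.subset_span (by simp)

lemma eq_ell {q : Ideal R} (hq : q ≠ ⊤) (h2 : (2 : R) ∈ q) (hω : T.ω ∈ q) : q = T.ell := by
  apply le_antisymm
  · intro x hx
    obtain ⟨a, t, rfl⟩ := T.basis_ω x
    have ha : (a : R) ∈ q := (q.add_mem_iff_left (q.mul_mem_left _ hω)).1 hx
    refine T.ell.add_mem ?_ (T.ell.mul_mem_left _ T.ω_mem_ell)
    rcases Int.even_or_odd' a with ⟨k, rfl | rfl⟩
    · push_cast; exact T.ell.mul_mem_right _ T.two_mem_ell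
    · exfalso
      apply hq
      rw [Ideal.eq_top_iff_one]
      push_cast at ha
      exact (q.add_mem_iff_right (q.mul_mem_right _ h2)).1 ha
  · rw [ell, Ideal.span_le]
    intro x hx
    rcases hx with rfl | rfl
    · exact h2
    · exact hω

lemma absNorm_ell_of {q : Ideal R} (hq : q ≠ ⊤) (hq0 : q ≠ ⊥) (h2 : (2 : R) ∈ q) (hω : T.ω ∈ q) : q.absNorm = 2 := by
  have h1 : q.absNorm ≠ 1 := by rwa [Ne, Ideal.absNorm_eq_one_iff]
  have h0 : q.absNorm ≠ 0 := by rwa [Ne, Ideal.absNorm_eq_zero_iff]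
  have hle : q.absNorm ≤ 2 := by
    rw [Ideal.absNorm_apply, Submodule.cardQuot_apply]
    have hs : Function.Surjective (fun b : Bool => (Ideal.Quotient.mk q (if b then 1 else 0))) := by
      intro y
      obtain ⟨x, rfl⟩ := Ideal.Quotient.mk_surjective y
      obtain ⟨a, t, rfl⟩ := T.basis_ω x
      rcases Int.even_or_odd' a with ⟨k, rfl | rfl⟩
      · refine ⟨false, ?_⟩
        change Ideal.Quotient.mk q 0 = _
        rw [Ideal.Quotient.mk_eq_mk_iff_sub_mem, ← neg_mem_iff]
        have := q.add_mem (q.mul_mem_right (k : R) h2) (q.mul_mem_left (t : R) hω)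
        push_cast
        convert this using 1; ring
      · refine ⟨true, ?_⟩
        change Ideal.Quotient.mk q 1 = _
        rw [Ideal.Quotient.mk_eq_mk_iff_sub_mem, ← neg_mem_iff]
        have := q.add_mem (q.mul_mem_right (k : R) h2) (q.mul_mem_left (t : R) hω)
        push_cast
        convert this using 1; ring
    have := Nat.card_le_card_of_surjective _ hs
    simpa using this
  omega

lemma ω_r_diff : T.g - T.σ T.g = ι T.ω * T.r := by
  have h := congrArg T.σ T.two_g
  rw [map_mul, map_mul, map_add, map_ofNat, map_one, T.σ_r, T.σ_alg] at h
  apply mul_left_cancel₀ (two_ne_zero (α := S))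
  linear_combination T.two_g - h

lemma comap_eq {q : Ideal R} {Q : Ideal S} (hq : q.IsPrime) (hq0 : q ≠ ⊥) (hQ : Q.IsPrime)
    (h : Q ∣ q.map ι) : Q.comap ι = q := by
  have hle : q ≤ Q.comap ι := Ideal.map_le_iff_le_comap.1 (Ideal.dvd_iff_le.1 h)
  have hm : q.IsMaximal := hq.isMaximal hq0
  exact (hm.eq_of_le (Ideal.comap_ne_top _ hQ.ne_top) hle).symm

lemma absNorm_le {q : Ideal R} {Q : Ideal S} (hQ0 : Q ≠ ⊥) (h : Q.comap ι = q) : q.absNorm ≤ Q.absNorm := by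
  subst h
  have hf : Q.absNorm ≠ 0 := by rwa [Ne, Ideal.absNorm_eq_zero_iff]
  rw [Ideal.absNorm_apply, Ideal.absNorm_apply, Submodule.cardQuot_apply, Submodule.cardQuot_apply]
  rw [Ideal.absNorm_apply, Submodule.cardQuot_apply] at hf
  have : Finite (S ⧸ Q) := Nat.finite_of_card_ne_zero hf
  exact Nat.card_le_card_of_injective _ (Ideal.quotientMap_injective (I := Q) (f := ι))

/-- ramified primes -/
lemma ram {q : Ideal R} {Q : Ideal S} (hq : q.IsPrime) (hq0 : q ≠ ⊥) (hQ : Q.IsPrime) (hQ0 : Q ≠ ⊥)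
    (h : Q ^ 2 ∣ q.map ι) : q.map ι = Q ^ 2 ∧ ((Q = Ideal.span {T.r} ∧ q = Ideal.span {T.w}) ∨
      (q = T.ell ∧ Q.absNorm = 2)) := by
  have hQq : Q ∣ q.map ι := (dvd_pow_self Q two_ne_zero).trans h
  have hc := T.comap_eq hq hq0 hQ hQq
  have hle := T.absNorm_le hQ0 hc
  have hQn : 0 < Q.absNorm := Nat.pos_of_ne_zero (by rwa [Ne, Ideal.absNorm_eq_zero_iff])
  have hqn : 0 < q.absNorm := Nat.pos_of_ne_zero (by rwa [Ne, Ideal.absNorm_eq_zero_iff])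
  have hmap : q.map ι = Q ^ 2 := by
    obtain ⟨E, hE⟩ := h
    have h1 := congrArg Ideal.absNorm hE
    rw [T.absNorm_map, map_mul, map_pow] at h1
    have h2 : E.absNorm = 1 := by
      have h3 : q.absNorm ^ 2 ≤ Q.absNorm ^ 2 := Nat.pow_le_pow_left hle 2
      have h4 : 0 < q.absNorm ^ 2 := pow_pos hqn 2
      have h5 : 0 < Q.absNorm ^ 2 := pow_pos hQn 2
      have h6 : E.absNorm ≠ 0 := by intro h; rw [h] at h1; omega
      by_contra h7
      have : 2 ≤ E.absNorm := by omega
      nlinarith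
    rw [Ideal.absNorm_eq_one_iff] at h2
    rw [hE, h2, Ideal.mul_top]
  refine ⟨hmap, ?_⟩
  have hd := T.ramS Q q hQ hq hq0 h
  have h1 := hd T.r
  have h2 := hd T.g
  rw [T.ω_r_diff] at h2
  rw [T.σ_r, sub_neg_eq_add, ← two_mul] at h1
  by_cases hr : T.r ∈ Q
  · left
    constructor
    · have hm : (Ideal.span {T.r}).IsMaximal := by
        apply Ideal.IsPrime.isMaximal ((Ideal.span_singleton_prime T.r_ne).2 T.r_prime)
        simpa using T.r_ne
      exact (hm.eq_of_le hQ.ne_top ((Ideal.span_singleton_le_iff_mem _).2 hr)).symm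
    · have hwp : (Ideal.span {T.w}).IsPrime := by
        apply Ideal.isPrime_of_irreducible_absNorm
        rw [T.absNorm_w]; exact hp.out
      have hm : (Ideal.span {T.w}).IsMaximal := hwp.isMaximal (by simpa using T.w_ne)
      refine (hm.eq_of_le hq.ne_top ((Ideal.span_singleton_le_iff_mem _).2 ?_)).symm
      rw [← hc, Ideal.mem_comap, ← T.r_sq]
      exact Ideal.pow_mem_of_mem _ hr 2 (by norm_num)
  · right
    have h2Q : (2 : R) ∈ q := by
      rw [← hc, Ideal.mem_comap, map_ofNat]
      exact (hQ.mem_or_mem h1).resolve_right hr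
    have hωQ : T.ω ∈ q := by
      rw [← hc, Ideal.mem_comap]
      exact (hQ.mem_or_mem h2).resolve_right hr
    refine ⟨T.eq_ell hq.ne_top h2Q hωQ, ?_⟩
    have h3 := T.absNorm_ell_of hq.ne_top hq0 h2Q hωQ
    have h4 := congrArg Ideal.absNorm hmap
    rw [T.absNorm_map, h3, map_pow] at h4
    exact (Nat.pow_left_injective (n := 2) (by norm_num) h4).symm

lemma structure_lemma (n : ℕ) : ∀ (N : Ideal R) (c : Ideal S), N.absNorm = n → N ≠ ⊥ → N.map ι = c ^ 2 →
    (∃ (i : ℕ) (C : Ideal R), C ≠ ⊥ ∧ c = Ideal.span {T.r} ^ i * C.map ι ∧ N = Ideal.span {T.w} ^ i * C ^ 2) ∨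
    (∃ (i : ℕ) (C : Ideal R) (L : Ideal S), C ≠ ⊥ ∧ L ^ 2 = T.ell.map ι ∧ L.absNorm = 2 ∧
      c = Ideal.span {T.r} ^ i * (L * C.map ι) ∧ N = Ideal.span {T.w} ^ i * (T.ell * C ^ 2)) := by
  induction n using Nat.strong_induction_on with
  | _ n ih =>
  intro N c hn hN hc
  by_cases hT : N = ⊤
  · left
    refine ⟨0, ⊤, top_ne_bot, ?_, ?_⟩
    · subst hT
      rw [Ideal.map_top] at hc ⊢
      rw [pow_zero, one_mul]
      apply ideal_sq_inj
      rw [← hc, Ideal.top_pow]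
    · rw [hT, pow_zero, one_mul, Ideal.top_pow]
  obtain ⟨q, hqp, hq, hqN⟩ := exists_prime_dvd_ideal hN hT
  have hq0 : q ≠ ⊥ := hqp.ne_zero
  have hqn1 : 2 ≤ q.absNorm := by
    have h1 : q.absNorm ≠ 1 := by rw [Ne, Ideal.absNorm_eq_one_iff]; exact hq.ne_top
    have h0 : q.absNorm ≠ 0 := by rwa [Ne, Ideal.absNorm_eq_zero_iff]
    omega
  obtain ⟨N', rfl⟩ := hqN
  have hN'0 : N' ≠ ⊥ := by rintro rfl; exact hN (Ideal.mul_bot q)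
  have hN'n : 0 < N'.absNorm := Nat.pos_of_ne_zero (by rwa [Ne, Ideal.absNorm_eq_zero_iff])
  rw [map_mul] at hn
  by_cases hqN' : q ∣ N'
  · obtain ⟨M, rfl⟩ := hqN'
    have hM0 : M ≠ ⊥ := by rintro rfl; exact hN'0 (Ideal.mul_bot q)
    have hMn : 0 < M.absNorm := Nat.pos_of_ne_zero (by rwa [Ne, Ideal.absNorm_eq_zero_iff])
    obtain ⟨E, hE1, hE2⟩ := ideal_sq_cofactor (A := c) (D := q.map ι) (N := M.map ι) (T.map_ne_bot hq0)
      (by rw [← hc, Ideal.map_mul, Ideal.map_mul]; ring)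
    rw [map_mul] at hn
    rcases ih M.absNorm (by rw [← hn]; nlinarith [Nat.mul_pos (by omega : 0 < q.absNorm) hMn]) M E rfl hM0 hE2 with
      ⟨i, C, hC0, hC1, hC2⟩ | ⟨i, C, L, hC0, hL1, hL2, hC1, hC2⟩
    · left
      refine ⟨i, q * C, mul_ne_zero hq0 hC0, ?_, ?_⟩
      · rw [hE1, hC1, Ideal.map_mul]; ring
      · rw [hC2]; ring
    · right
      refine ⟨i, q * C, L, mul_ne_zero hq0 hC0, hL1, hL2, ?_, ?_⟩
      · rw [hE1, hC1, Ideal.map_mul]; ring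
      · rw [hC2]; ring
  · have hmt : q.map ι ≠ ⊤ := by
      intro h
      have h1 := T.absNorm_map q
      rw [h, Ideal.absNorm_top] at h1
      nlinarith
    obtain ⟨Q, hQp, hQ, hQq⟩ := exists_prime_dvd_ideal (T.map_ne_bot hq0) hmt
    have hQ0 : Q ≠ ⊥ := hQp.ne_zero
    have hQc : Q ∣ c := by
      apply hQp.dvd_of_dvd_pow (n := 2)
      rw [← hc, Ideal.map_mul]
      exact hQq.mul_right _
    have hcm := T.comap_eq hq hq0 hQ hQq
    have hQN' : ¬ Q ∣ N'.map ι := by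
      intro h
      apply hqN'
      rw [Ideal.dvd_iff_le, ← hcm]
      exact Ideal.map_le_iff_le_comap.1 (Ideal.dvd_iff_le.1 h)
    have hQ2 : Q ^ 2 ∣ q.map ι := by
      apply hQp.pow_dvd_of_dvd_mul_right 2 hQN'
      rw [← Ideal.map_mul, hc]
      exact pow_dvd_pow_of_dvd hQc 2
    obtain ⟨hmap, hcase⟩ := T.ram hq hq0 hQ hQ0 hQ2
    obtain ⟨E, hE1, hE2⟩ := ideal_sq_cofactor (A := c) (D := Q) (N := N'.map ι) hQ0
      (by rw [← hc, Ideal.map_mul, hmap])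
    rcases ih N'.absNorm (by rw [← hn]; nlinarith) N' E rfl hN'0 hE2 with
      ⟨i, C, hC0, hC1, hC2⟩ | ⟨i, C, L, hC0, hL1, hL2, hC1, hC2⟩
    · rcases hcase with ⟨rfl, rfl⟩ | ⟨rfl, hQn⟩
      · left
        refine ⟨i + 1, C, hC0, ?_, ?_⟩
        · rw [hE1, hC1]; ring
        · rw [hC2]; ring
      · right
        refine ⟨i, C, Q, hC0, hmap.symm, hQn, ?_, ?_⟩
        · rw [hE1, hC1]; ring
        · rw [hC2]; ring
    · rcases hcase with ⟨rfl, rfl⟩ | ⟨rfl, hQn⟩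
      · right
        refine ⟨i + 1, C, L, hC0, hL1, hL2, ?_, ?_⟩
        · rw [hE1, hC1]; ring
        · rw [hC2]; ring
      · left
        have hLQ : L = Q := ideal_sq_inj (by rw [hL1, hmap])
        refine ⟨i, T.ell * C, mul_ne_zero hq0 hC0, ?_, ?_⟩
        · rw [hE1, hC1, hLQ, Ideal.map_mul, hmap]; ring
        · rw [hC2]; ring

lemma not_p_dvd_two : ¬ p ∣ 2 := by
  intro h
  have := Nat.le_of_dvd (by norm_num) h
  have := T.hmod
  have := hp.out.two_le
  omega

lemma two_ne_zmod : (2 : ZMod p) ≠ 0 := by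
  intro h
  have h' : ((2 : ℕ) : ZMod p) = 0 := by exact_mod_cast h
  rw [ZMod.natCast_eq_zero_iff] at h'
  exact T.not_p_dvd_two h'

lemma chi_of_two [Finite (ClassGroup R)] {i : ℕ} {C : Ideal R} {L : Ideal S} (hC : C ≠ ⊥) (hL : L.absNorm = 2) :
    chi p (Ideal.span {T.r} ^ i * (L * C.map ι)) = 2 ^ ((p - 1) / 4) := by
  rw [chi_mul, chi_mul, chi_pow, T.chi_span _ T.r_ne, T.chi_map C hC, one_pow, one_mul, mul_one, chi_coprime]
  · rw [hL]; simp
  · rw [hL]; exact T.not_p_dvd_two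

end Tower
end PQ

namespace PQ
universe u

section cl
variable {D : Type*} [CommRing D] [IsDedekindDomain D]
noncomputable def cl (A : Ideal D) (hA : A ≠ ⊥) : ClassGroup D :=
  ClassGroup.mk0 ⟨A, mem_nonZeroDivisors_of_ne_zero hA⟩

lemma cl_surj (c : ClassGroup D) : ∃ A, ∃ hA : A ≠ ⊥, cl A hA = c := by
  obtain ⟨⟨A, hA⟩, rfl⟩ := ClassGroup.mk0_surjective c
  exact ⟨A, nonZeroDivisors.ne_zero hA, rfl⟩

lemma cl_mul {A B : Ideal D} (hA : A ≠ ⊥) (hB : B ≠ ⊥) (hAB : A * B ≠ ⊥) :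
    cl (A * B) hAB = cl A hA * cl B hB := by
  unfold cl
  rw [← map_mul]; rfl

lemma cl_pow {A : Ideal D} (hA : A ≠ ⊥) (n : ℕ) (hAn : A ^ n ≠ ⊥) : cl (A ^ n) hAn = cl A hA ^ n := by
  unfold cl
  rw [← map_pow]; rfl

lemma cl_span {x : D} (hx : Ideal.span {x} ≠ ⊥) : cl (Ideal.span {x}) hx = 1 := by
  unfold cl
  rw [ClassGroup.mk0_eq_one_iff]
  exact ⟨⟨x, rfl⟩⟩

lemma span_ne {x : D} (hx : x ≠ 0) : Ideal.span {x} ≠ ⊥ := by simpa using hx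

lemma cl_one {A : Ideal D} (hA : A ≠ ⊥) (h : cl A hA = 1) : ∃ x, x ≠ 0 ∧ A = Ideal.span {x} := by
  unfold cl at h
  rw [ClassGroup.mk0_eq_one_iff] at h
  obtain ⟨x, hx⟩ := h.principal
  have hx : A = Ideal.span {x} := hx
  refine ⟨x, ?_, hx⟩
  rintro rfl
  rw [Ideal.span_singleton_zero] at hx
  exact hA hx

lemma cl_congr {A B : Ideal D} (hA : A ≠ ⊥) (h : A = B) : cl A hA = cl B (h ▸ hA) := by subst h; rfl

end cl

variable {p : ℕ} [hp : Fact p.Prime] {R S : Type u} [CommRing R] [IsDedekindDomain R] [Module.Free ℤ R]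
    [Module.Finite ℤ R] [CharZero R] [CommRing S] [IsDedekindDomain S] [Module.Free ℤ S]
    [Module.Finite ℤ S] [CharZero S] [Algebra R S]

namespace Tower
variable (T : Tower p R S)
include T
local notation "ι" => algebraMap R S

lemma chiC_cl {A : Ideal S} (hA : A ≠ ⊥) : T.chiC (cl A hA) = chi p A := T.chiC_mk0 _

lemma ι_dvd {a b : R} (h : ι a ∣ ι b) : a ∣ b := by
  obtain ⟨t, ht⟩ := h
  by_cases ha : a = 0
  · subst ha
    rw [map_zero, zero_mul] at ht
    rw [(map_eq_zero_iff _ T.inj).1 ht]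
  · have h1 := congrArg T.σ ht
    rw [map_mul, T.σ_alg, T.σ_alg, ht] at h1
    obtain ⟨y, hy⟩ := T.σ_fix t (mul_left_cancel₀ (T.alg_ne ha) h1.symm)
    refine ⟨y, T.inj ?_⟩
    rw [ht, ← hy, map_mul]

lemma ι_span_inj {a b : R} (h : Ideal.span {ι a} = Ideal.span {ι b}) : Ideal.span {a} = Ideal.span {b} := by
  apply le_antisymm <;> rw [Ideal.span_singleton_le_span_singleton] <;> apply T.ι_dvd <;>
    rw [← Ideal.mem_span_singleton]
  · rw [← h]; exact Ideal.mem_span_singleton_self _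
  · rw [h]; exact Ideal.mem_span_singleton_self _

lemma nm_pos {γ : S} (hγ : γ ≠ 0) {y : R} (hy : γ * T.σ γ = ι y) : 0 < T.φ2 y := by
  have hσ : T.σ γ ≠ 0 := (map_ne_zero_iff _ T.σ.injective).2 hγ
  have hy0 : y ≠ 0 := by
    rintro rfl
    rw [map_zero] at hy
    exact mul_ne_zero hγ hσ hy
  obtain ⟨x, hx⟩ := T.trS γ
  obtain ⟨z, hz⟩ := T.dfS γ
  have h1 : 4 * T.w * y = T.w * x ^ 2 - z ^ 2 := by
    apply T.inj
    simp only [map_sub, map_mul, map_pow, map_ofNat]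
    rw [← hx, ← hz, ← hy, ← T.r_sq]; ring
  have h2 := congrArg T.φ2 h1
  simp only [map_sub, map_mul, map_pow, map_ofNat] at h2
  have hw := T.φ2_w
  have hne := map_ne_zero_real T.φ2 y hy0
  by_contra hle
  have hlt : T.φ2 y < 0 := lt_of_le_of_ne (not_lt.1 hle) hne
  nlinarith [mul_pos_of_neg_of_neg hw hlt, sq_nonneg (T.φ2 x), sq_nonneg (T.φ2 z),
    mul_nonneg (neg_nonneg.2 hw.le) (sq_nonneg (T.φ2 x))]

lemma nm_unit {s : S} (hs : IsUnit s) {y : R} (hy : s * T.σ s = ι y) : IsUnit y := by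
  rw [isUnit_iff_dvd_one]
  apply T.ι_dvd
  rw [← hy, map_one]
  exact (hs.mul (hs.map T.σ)).dvd

section
variable [Finite (ClassGroup R)]

lemma cl_odd {A : Ideal R} (hA : A ≠ ⊥) (h : cl A hA ^ 2 = 1) : cl A hA = 1 := by
  obtain ⟨n, hn⟩ := T.odd_classR
  have h1 : cl A hA ^ Nat.card (ClassGroup R) = 1 := pow_card_eq_one'
  rwa [hn, pow_succ, pow_mul, h, one_pow, one_mul] at h1

lemma cl_map_odd : ∃ h : ℕ, Odd h ∧ ∀ (C : Ideal R) (_ : C ≠ ⊥) (hC' : C.map ι ≠ ⊥), cl (C.map ι) hC' ^ h = 1 := by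
  obtain ⟨h, ho, hh⟩ := T.exists_h
  refine ⟨h, ho, fun C hC hC' => ?_⟩
  obtain ⟨d, hd0, hd⟩ := hh C hC
  have h0 : (C.map ι) ^ h ≠ ⊥ := pow_ne_zero _ hC'
  rw [← cl_pow hC' h h0]
  have he : (C.map ι) ^ h = Ideal.span {ι d} := by rw [← Ideal.map_pow, hd, map_ι_span]
  rw [cl_congr h0 he, cl_span]

/-- Case where the unit is a square. -/
lemma case_sq {A : Ideal S} (hA : A ≠ ⊥) {γ : S} (hγ : A ^ 2 = Ideal.span {γ}) {m : R}
    (hm : γ * T.σ γ = ι m ^ 2) : cl A hA = 1 ∨ chi p A = 2 ^ ((p - 1) / 4) := by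
  have hγ0 : γ ≠ 0 := by
    rintro rfl
    rw [Ideal.span_singleton_zero] at hγ
    exact hA (pow_eq_zero_iff two_ne_zero |>.1 hγ)
  have hm0 : ι m ≠ 0 := by
    intro h
    rw [h, zero_pow two_ne_zero] at hm
    exact mul_ne_zero hγ0 ((map_ne_zero_iff _ T.σ.injective).2 hγ0) hm
  obtain ⟨m', hm', hne⟩ : ∃ m' : R, γ * T.σ γ = ι m' ^ 2 ∧ γ + ι m' ≠ 0 := by
    by_cases h : γ + ι m = 0
    · refine ⟨-m, by rw [hm, map_neg]; ring, ?_⟩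
      intro h2
      rw [map_neg] at h2
      apply hm0
      apply mul_left_cancel₀ (two_ne_zero (α := S))
      linear_combination h - h2
    · exact ⟨m, hm, h⟩
  obtain ⟨x, hx⟩ := T.trS γ
  have hsq : (γ + ι m') ^ 2 = γ * ι (x + 2 * m') := by
    rw [map_add, map_mul, map_ofNat, ← hx]
    linear_combination -hm'
  have hn0 : x + 2 * m' ≠ 0 := by
    intro h
    rw [h, map_zero, mul_zero] at hsq
    exact hne (pow_eq_zero_iff two_ne_zero |>.1 hsq)
  obtain ⟨E, hE1, hE2⟩ := ideal_sq_cofactor (A := Ideal.span {γ + ι m'}) (D := A)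
    (N := (Ideal.span {x + 2 * m'}).map ι) hA (by rw [span_sq, hsq, ← span_mul, hγ, map_ι_span])
  have hE0 : E ≠ ⊥ := by
    rintro rfl
    rw [Ideal.mul_bot] at hE1
    exact span_ne hne hE1
  rcases T.structure_lemma _ _ _ rfl (span_ne hn0) hE2 with
    ⟨i, C, hC0, hC1, -⟩ | ⟨i, C, L, hC0, hL1, hL2, hC1, -⟩
  · left
    obtain ⟨h, ho, hh⟩ := T.cl_map_odd
    have hmC := T.map_ne_bot hC0
    have hr0 : Ideal.span {T.r} ≠ ⊥ := span_ne T.r_ne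
    have hri : Ideal.span {T.r} ^ i ≠ ⊥ := pow_ne_zero _ hr0
    have h1 : cl A hA * cl E hE0 = 1 := by
      rw [← cl_mul hA hE0 (mul_ne_zero hA hE0), cl_congr _ hE1.symm, cl_span]
    have h2 : cl E hE0 = cl (C.map ι) hmC := by
      rw [cl_congr _ hC1, cl_mul hri hmC, cl_pow hr0, cl_span, one_pow, one_mul]
    have h3 : cl A hA ^ 2 = 1 := by
      rw [← cl_pow hA 2 (pow_ne_zero _ hA), cl_congr _ hγ, cl_span]
    apply eq_one_of_odd_pow (h := h) _ ho
    · have h4 : (cl A hA * cl E hE0) ^ h = 1 := by rw [h1, one_pow]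
      rwa [mul_pow, h2, hh C hC0, mul_one] at h4
    · rw [show 4 = 2 * 2 by rfl, pow_mul, h3, one_pow]
  · right
    have h1 := T.chi_of_two (i := i) hC0 hL2
    rw [← hC1] at h1
    have h2 := T.chi_span _ hne
    rw [hE1, chi_mul] at h2
    rw [← h1]
    have h3 := T.chi_sq E hE0
    calc chi p A = chi p A * chi p E ^ 2 := by rw [h3, mul_one]
      _ = (chi p A * chi p E) * chi p E := by ring
      _ = chi p E := by rw [h2, one_mul]

/-- If `2` is not quartic there is a unit of norm `-1`. -/
lemma exists_eta (h2 : (2 : ZMod p) ^ ((p - 1) / 4) ≠ 1) :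
    ∃ η : S, IsUnit η ∧ ∃ y : R, η * T.σ η = ι y ∧ y * T.τ y = -1 := by
  by_contra hcon
  push Not at hcon
  have hnm : ∀ s : S, IsUnit s → ∃ e : R, IsUnit e ∧ s * T.σ s = ι e ^ 2 := by
    intro s hs
    obtain ⟨y, hy⟩ := T.nmS s
    have hyu := T.nm_unit hs hy
    have h1 := (T.norm_unit hyu).resolve_right (hcon s hs y hy)
    obtain ⟨e, he⟩ := T.unit_sq h1 (T.nm_pos hs.ne_zero hy)
    refine ⟨e, ?_, by rw [hy, he, map_mul, pow_two]⟩
    rw [he] at hyu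
    exact isUnit_of_mul_isUnit_left hyu
  have hN1 : ∀ θ : S, θ * T.σ θ = 1 → ∃ s : S, θ = s ^ 2 ∨ θ = - s ^ 2 := by
    intro θ hθ
    have hθu : IsUnit θ := IsUnit.of_mul_eq_one _ hθ
    by_cases hm : θ + 1 = 0
    · exact ⟨1, Or.inr (by linear_combination hm)⟩
    obtain ⟨x, hx⟩ := T.trS θ
    have hsq : (θ + 1) ^ 2 = θ * ι (x + 2) := by
      rw [map_add, map_ofNat, ← hx]
      linear_combination -hθ
    have hn0 : x + 2 ≠ 0 := by
      intro h
      rw [h, map_zero, mul_zero] at hsq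
      exact hm (pow_eq_zero_iff two_ne_zero |>.1 hsq)
    have hmap : (Ideal.span {x + 2}).map ι = Ideal.span {θ + 1} ^ 2 := by
      rw [span_sq, hsq, map_ι_span, Ideal.span_singleton_mul_left_unit hθu]
    rcases T.structure_lemma _ _ _ rfl (span_ne hn0) hmap with
      ⟨i, C, hC0, hC1, hC2⟩ | ⟨i, C, L, hC0, hL1, hL2, hC1, -⟩
    · have hcl : cl C hC0 ^ 2 = 1 := by
        have hw0 := span_ne T.w_ne
        have h1 := cl_span (span_ne hn0)
        rw [cl_congr _ hC2, cl_mul (pow_ne_zero i hw0) (pow_ne_zero 2 hC0), cl_pow hw0, cl_span,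
          one_pow, one_mul, cl_pow hC0] at h1
        exact h1
      obtain ⟨d, hd0, rfl⟩ := cl_one hC0 (T.cl_odd hC0 hcl)
      rw [span_sq, Ideal.span_singleton_pow, span_mul, Ideal.span_singleton_eq_span_singleton] at hC2
      rw [map_ι_span, Ideal.span_singleton_pow, span_mul, Ideal.span_singleton_eq_span_singleton] at hC1
      obtain ⟨u, hu⟩ := hC2.symm
      obtain ⟨v, hv⟩ := hC1.symm
      have hv2 : (v : S) ^ 2 = θ * ι u := by
        have hne : (T.r ^ i * ι d) ^ 2 ≠ 0 := pow_ne_zero _ (mul_ne_zero (pow_ne_zero _ T.r_ne) (T.alg_ne hd0))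
        apply mul_left_cancel₀ hne
        rw [← mul_pow, hv, hsq, ← hu, map_mul, map_mul, map_pow, map_pow, ← T.r_sq]
        ring
      obtain ⟨e, heu, he⟩ := hnm v v.isUnit
      have hue : (u : R) ^ 2 = (e ^ 2) ^ 2 := by
        apply T.inj
        have h3 := congrArg T.σ hv2
        rw [map_mul, map_pow, T.σ_alg] at h3
        calc ι ((u : R) ^ 2) = (θ * T.σ θ) * ι u ^ 2 := by rw [hθ, one_mul, map_pow]
          _ = (θ * ι u) * (T.σ θ * ι u) := by ring
          _ = (v * T.σ v) ^ 2 := by rw [← hv2, ← h3]; ring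
          _ = _ := by rw [he]; simp
      obtain ⟨f, hf⟩ := heu.exists_right_inv
      have hf' : ι e * ι f = 1 := by rw [← map_mul, hf, map_one]
      refine ⟨v * ι f, ?_⟩
      rcases sq_eq_sq_iff_eq_or_eq_neg.1 hue with h | h
      · left
        rw [mul_pow, hv2, h, map_pow]
        calc θ = θ * (ι e * ι f) ^ 2 := by rw [hf']; ring
          _ = _ := by ring
      · right
        rw [mul_pow, hv2, h, map_neg, map_pow]
        calc θ = θ * (ι e * ι f) ^ 2 := by rw [hf']; ring
          _ = _ := by ring
    · exfalso
      have h1 := T.chi_of_two (i := i) hC0 hL2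
      rw [← hC1, T.chi_span _ hm] at h1
      exact h2 h1.symm
  obtain ⟨ε, hε⟩ := T.exists_eps
  have hεu : IsUnit ε := T.unit_of_norm (n := -1) (by rw [hε]; simp) (Or.inr rfl)
  have hR1 : ∀ e : R, e * T.τ e = 1 → ∃ f : R, e = f ^ 2 ∨ e = - f ^ 2 := by
    intro e he
    have he0 : e ≠ 0 := by rintro rfl; simp at he
    rcases lt_or_gt_of_ne (map_ne_zero_real T.φ2 e he0) with h | h
    · obtain ⟨f, hf⟩ := T.unit_sq (u := -e) (by rw [map_neg, neg_mul_neg, he]) (by rw [map_neg]; linarith)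
      exact ⟨f, Or.inr (by linear_combination -hf)⟩
    · obtain ⟨f, hf⟩ := T.unit_sq he h
      exact ⟨f, Or.inl (by rw [hf, pow_two])⟩
  have hR : ∀ e : R, IsUnit e → ∃ f : R, e = f ^ 2 ∨ e = - f ^ 2 ∨ e = ε * f ^ 2 ∨ e = - (ε * f ^ 2) := by
    intro e he
    rcases T.norm_unit he with h | h
    · obtain ⟨f, hf | hf⟩ := hR1 e h
      · exact ⟨f, Or.inl hf⟩
      · exact ⟨f, Or.inr (Or.inl hf)⟩
    · obtain ⟨k, hk⟩ := hεu.exists_right_inv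
      obtain ⟨f, hf | hf⟩ := hR1 (e * ε) (by
        rw [map_mul, mul_mul_mul_comm, h, hε]; ring)
      · refine ⟨f * k, Or.inr (Or.inr (Or.inl ?_))⟩
        calc e = e * (ε * k) ^ 2 := by rw [hk]; ring
          _ = ε * (e * ε) * k ^ 2 := by ring
          _ = _ := by rw [hf]; ring
      · refine ⟨f * k, Or.inr (Or.inr (Or.inr ?_))⟩
        calc e = e * (ε * k) ^ 2 := by rw [hk]; ring
          _ = ε * (e * ε) * k ^ 2 := by ring
          _ = _ := by rw [hf]; ring
  apply T.units
  refine ⟨(hεu.map ι).unit, fun s => ?_⟩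
  obtain ⟨e, heu, he⟩ := hnm s s.isUnit
  obtain ⟨f, hf⟩ := heu.exists_right_inv
  have hf' : ι e * ι f = 1 := by rw [← map_mul, hf, map_one]
  obtain ⟨t, ht⟩ := hN1 (s * ι f) (by
    rw [map_mul, T.σ_alg, mul_mul_mul_comm, he]
    calc ι e ^ 2 * (ι f * ι f) = (ι e * ι f) ^ 2 := by ring
      _ = 1 := by rw [hf']; ring)
  have hs : (s : S) = ι e * (s * ι f) := by
    calc (s : S) = s * (ι e * ι f) := by rw [hf', mul_one]
      _ = _ := by ring
  obtain ⟨k, hk⟩ := hR e heu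
  have hex : ∃ t : S, (s : S) = t ^ 2 ∨ (s : S) = - t ^ 2 ∨ (s : S) = ι ε * t ^ 2 ∨ (s : S) = - (ι ε * t ^ 2) := by
    refine ⟨ι k * t, ?_⟩
    rcases ht with ht | ht <;> rcases hk with hk | hk | hk | hk <;> rw [ht, hk] at hs <;> rw [hs] <;>
      simp only [map_neg, map_mul, map_pow]
    · left; ring
    · right; left; ring
    · right; right; left; ring
    · right; right; right; ring
    · right; left; ring
    · left; ring
    · right; right; right; ring
    · right; right; left; ring
  obtain ⟨t, ht⟩ := hex
  have htu : IsUnit t := by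
    have hd : t ∣ (s : S) := by
      rcases ht with ht | ht | ht | ht <;> rw [ht]
      · exact dvd_pow_self _ two_ne_zero
      · exact (dvd_pow_self _ two_ne_zero).neg_right
      · exact (dvd_pow_self _ two_ne_zero).mul_left _
      · exact ((dvd_pow_self _ two_ne_zero).mul_left _).neg_right
    exact isUnit_of_dvd_unit hd s.isUnit
  refine ⟨htu.unit, ?_⟩
  rcases ht with ht | ht | ht | ht
  · left; ext; simpa using ht
  · right; left; ext; simpa using ht
  · right; right; left; ext; simpa using ht
  · right; right; right; ext; simpa using ht

end

end Tower
end PQ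

namespace PQ
universe u
variable {p : ℕ} [hp : Fact p.Prime] {R S : Type u} [CommRing R] [IsDedekindDomain R] [Module.Free ℤ R]
    [Module.Finite ℤ R] [CharZero R] [CommRing S] [IsDedekindDomain S] [Module.Free ℤ S]
    [Module.Finite ℤ S] [CharZero S] [Algebra R S]

namespace Tower
variable (T : Tower p R S)
include T
local notation "ι" => algebraMap R S

lemma nm_rho {b : R} {n : ℤ} (hn : b * T.τ b = n) : (n : ZMod p) = T.ρk b ^ 2 := by
  have := congrArg T.ρk hn
  rw [map_mul, T.ρk_τ, map_intCast] at this
  rw [← this, pow_two]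

/-- absNorm of a principal ideal coprime to `w`, raised to `(p-1)/4`. -/
lemma absNorm_span_q (b : R) : ((Ideal.span {b}).absNorm : ZMod p) ^ ((p - 1) / 4) =
    (T.ρk b ^ 2) ^ ((p - 1) / 4) := by
  obtain ⟨n, hn⟩ := T.nmR b
  rw [T.normR hn, T.natAbs_q, T.nm_rho hn]

lemma absNorm_span_ne {b : R} (hb : T.ρk b ≠ 0) : ¬ p ∣ (Ideal.span {b}).absNorm := by
  obtain ⟨n, hn⟩ := T.nmR b
  rw [T.normR hn]
  intro h
  have h2 : (p : ℤ) ∣ n := Int.natCast_dvd.2 h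
  rw [← ZMod.intCast_zmod_eq_zero_iff_dvd, T.nm_rho hn] at h2
  exact hb (pow_eq_zero_iff two_ne_zero |>.1 h2)

lemma setup [Finite (ClassGroup R)] (c : ClassGroup S) (hc : c ^ 2 = 1) :
    ∃ (A : Ideal S) (hA : A ≠ ⊥) (b u : R) (γ : S), cl A hA = c ∧ A ^ 2 = Ideal.span {γ} ∧ γ ≠ 0 ∧
      T.ρk b ≠ 0 ∧ T.ρ γ ≠ 0 ∧ chi p A = (T.ρk b ^ 2) ^ ((p - 1) / 4) ∧ IsUnit u ∧
      γ * T.σ γ = ι u * ι b ^ 2 ∧ 0 < T.φ2 u := by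
  obtain ⟨A0, hA0, rfl⟩ := cl_surj c
  have hr0 : Ideal.span {T.r} ≠ ⊥ := span_ne T.r_ne
  have hrp : Prime (Ideal.span {T.r}) := by
    rw [Ideal.prime_iff_isPrime hr0, Ideal.span_singleton_prime T.r_ne]; exact T.r_prime
  have hfin : FiniteMultiplicity (Ideal.span {T.r}) A0 :=
    FiniteMultiplicity.of_prime_left hrp hA0
  obtain ⟨A1, hA1, hnd⟩ := hfin.exists_eq_pow_mul_and_not_dvd
  have hA10 : A1 ≠ ⊥ := by
    rintro rfl
    rw [Ideal.mul_bot] at hA1; exact hA0 hA1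
  have hcl : cl A0 hA0 = cl A1 hA10 := by
    rw [cl_congr _ hA1, cl_mul (pow_ne_zero _ hr0) hA10, cl_pow hr0, cl_span, one_pow, one_mul]
  rw [hcl] at hc ⊢
  obtain ⟨h, ho, hh⟩ := T.exists_h
  obtain ⟨B, hB⟩ := T.normS A1
  have hB0 : B ≠ ⊥ := by
    rintro rfl
    rw [Ideal.map_bot] at hB
    rcases mul_eq_zero.1 hB.symm with h | h
    · exact hA10 h
    · have : A1.map T.σ = ⊥ := h
      rw [Ideal.map_eq_bot_iff_of_injective T.σ.injective] at this
      exact hA10 this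
  obtain ⟨b, hb0, hb⟩ := hh B hB0
  have hA : A1 ^ h ≠ ⊥ := pow_ne_zero _ hA10
  have hAA : (Ideal.span {b}).map ι = (A1 ^ h) * (A1 ^ h).map T.σ := by
    rw [← hb, Ideal.map_pow, hB, mul_pow, Ideal.map_pow]
  have hclA : cl (A1 ^ h) hA = cl A1 hA10 := by
    obtain ⟨k, rfl⟩ := ho
    rw [cl_pow hA10, pow_succ, pow_mul, hc, one_pow, one_mul]
  have hclA2 : cl ((A1 ^ h) ^ 2) (pow_ne_zero _ hA) = 1 := by
    rw [cl_pow hA, hclA, hc]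
  obtain ⟨γ, hγ0, hγ⟩ := cl_one _ hclA2
  have hργ : T.ρ γ ≠ 0 := by
    rw [Ne, T.ρ_zero, ← Ideal.span_singleton_le_span_singleton, ← Ideal.dvd_iff_le, ← hγ]
    intro hd
    exact hnd (hrp.dvd_of_dvd_pow (hrp.dvd_of_dvd_pow hd))
  obtain ⟨y, hy⟩ := T.nmS γ
  have hsp : Ideal.span {ι y} = Ideal.span {ι (b ^ 2)} := by
    rw [← hy, ← span_mul, ← T.map_σ_span, ← hγ, Ideal.map_pow, ← mul_pow, ← hAA, map_ι_span, span_sq, map_pow]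
  have hsp2 := T.ι_span_inj hsp
  obtain ⟨u, hu⟩ := (Ideal.span_singleton_eq_span_singleton.1 hsp2).symm
  have hgg : γ * T.σ γ = ι u * ι b ^ 2 := by
    rw [hy, ← hu, map_mul, map_pow, mul_comm]
  have hρb : T.ρk b ≠ 0 := by
    intro h
    rw [ρk_apply] at h
    have := congrArg T.ρ hgg
    rw [map_mul, map_mul, map_pow, h, T.ρ_σ, zero_pow two_ne_zero, mul_zero] at this
    exact hργ (mul_self_eq_zero.1 this)
  refine ⟨A1 ^ h, hA, b, u, γ, hclA, hγ, hγ0, hρb, hργ, ?_, u.isUnit, hgg, ?_⟩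
  · have := T.absNorm_of_map hAA
    rw [chi_coprime _ (by rw [← this]; exact T.absNorm_span_ne hρb), ← this, T.absNorm_span_q]
  · have h1 := T.nm_pos hγ0 hy
    rw [← hu, map_mul, map_pow] at h1
    have h2 : 0 < T.φ2 b ^ 2 := sq_pos_of_ne_zero (map_ne_zero_real T.φ2 b hb0)
    exact (pos_iff_pos_of_mul_pos h1).1 h2

/-- 2 nonquartic -/
lemma nonquartic [Finite (ClassGroup R)] (h2 : (2 : ZMod p) ^ ((p - 1) / 4) ≠ 1) (c : ClassGroup S) (hc : c ^ 2 = 1)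
    (hc1 : c ≠ 1) : T.chiC c = 2 ^ ((p - 1) / 4) := by
  obtain ⟨A, hA, b, u, γ, hcl, hγ, hγ0, hb, hργ, hchi, hu, hgg, hpos⟩ := T.setup c hc
  rw [← hcl, T.chiC_cl]
  rw [← hcl] at hc1
  have key : ∃ (δ : S) (v : R), A ^ 2 = Ideal.span {δ} ∧ δ * T.σ δ = ι v * ι b ^ 2 ∧ v * T.τ v = 1 ∧ 0 < T.φ2 v := by
    rcases T.norm_unit hu with h | h
    · exact ⟨γ, u, hγ, hgg, h, hpos⟩
    · obtain ⟨η, hη, y, hy, hyN⟩ := T.exists_eta h2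
      refine ⟨η * γ, u * y, ?_, ?_, ?_, ?_⟩
      · rw [hγ, Ideal.span_singleton_mul_left_unit hη]
      · rw [map_mul, mul_mul_mul_comm, hy, hgg, map_mul]; ring
      · rw [map_mul, mul_mul_mul_comm, h, hyN]; ring
      · rw [map_mul]; exact mul_pos hpos (T.nm_pos hη.ne_zero hy)
  obtain ⟨δ, v, hδ, hdd, hv, hvp⟩ := key
  obtain ⟨e, he⟩ := T.unit_sq hv hvp
  refine (T.case_sq hA hδ (m := e * b) ?_).resolve_left hc1
  rw [hdd, he, map_mul, map_mul]; ring

end Tower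
end PQ

namespace PQ
universe u
section gen
variable {D : Type*} [CommRing D] [IsDedekindDomain D]

lemma prod_one {M : Type*} [CommMonoid M] (f : Ideal D →* M) {I : Ideal D} (hI : I ≠ ⊥)
    (h : ∀ (q : Ideal D) (e : ℕ), q.IsPrime → q ≠ ⊥ → q ∣ I → q ^ e ∣ I → ¬ q ^ (e + 1) ∣ I → f q ^ e = 1) : f I = 1 := by
  classical
  have h1 := Ideal.prod_normalizedFactors_eq_self hI
  rw [← h1, map_multiset_prod, Finset.prod_multiset_map_count]
  apply Finset.prod_eq_one
  intro q hq
  rw [Multiset.mem_toFinset] at hq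
  have hqp := UniqueFactorizationMonoid.prime_of_normalized_factor q hq
  have hm := UniqueFactorizationMonoid.emultiplicity_eq_count_normalizedFactors hqp.irreducible hI
  rw [normalize_eq] at hm
  rw [emultiplicity_eq_coe] at hm
  exact h q _ (Ideal.isPrime_of_prime hqp) hqp.ne_zero
    (UniqueFactorizationMonoid.dvd_of_mem_normalizedFactors hq) hm.1 hm.2

lemma sq_not_mem {P : Ideal D} (hP : P.IsPrime) (hP0 : P ≠ ⊥) {a : D} {f : ℕ} (h1 : a ∈ P ^ f) (h2 : a ∉ P ^ (f + 1)) :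
    a ^ 2 ∉ P ^ (2 * f + 1) := by
  have hp := Ideal.prime_of_isPrime hP0 hP
  rw [← Ideal.span_singleton_le_iff_mem, ← Ideal.dvd_iff_le] at h1 h2 ⊢
  obtain ⟨C, hC⟩ := h1
  rw [← span_sq, hC]
  intro h
  rw [show (P ^ f * C) ^ 2 = P ^ (2 * f) * C ^ 2 by ring, pow_succ] at h
  have h3 := (mul_dvd_mul_iff_left (pow_ne_zero _ hP0)).1 h
  apply h2
  rw [hC, pow_succ]
  exact mul_dvd_mul_left _ (hp.dvd_of_dvd_pow h3)

/-- odd powers dividing squares -/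
lemma odd_pow_dvd_sq {P : Ideal D} (hP : P.IsPrime) (hP0 : P ≠ ⊥) {A : Ideal D} {e : ℕ} (ho : Odd e) (h : P ^ e ∣ A ^ 2) :
    P ^ (e + 1) ∣ A ^ 2 := by
  have hp := Ideal.prime_of_isPrime hP0 hP
  obtain ⟨k, rfl⟩ := ho
  have h1 : P ^ k ∣ A := by
    apply ideal_sq_dvd
    rw [← pow_mul]
    exact (pow_dvd_pow _ (by omega)).trans h
  obtain ⟨C, rfl⟩ := h1
  rw [show (P ^ k * C) ^ 2 = P ^ (2 * k) * C ^ 2 by ring, pow_succ] at h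
  have h3 := (mul_dvd_mul_iff_left (pow_ne_zero _ hP0)).1 h
  have h4 := hp.dvd_of_dvd_pow h3
  rw [show 2 * k + 1 + 1 = (k + 1) * 2 by ring, pow_mul]
  apply pow_dvd_pow_of_dvd
  rw [pow_succ]
  exact mul_dvd_mul_left _ h4

lemma mem_pow_of_mul {P : Ideal D} (hP : P.IsPrime) (hP0 : P ≠ ⊥) {a b : D} {e : ℕ} (ha : a ∉ P) (h : a * b ∈ P ^ e) : b ∈ P ^ e := by
  have hp := Ideal.prime_of_isPrime hP0 hP
  rw [← Ideal.span_singleton_le_iff_mem, ← Ideal.dvd_iff_le] at ha h ⊢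
  rw [← span_mul] at h
  exact hp.pow_dvd_of_dvd_mul_left e ha h

lemma sq_of_coprime {x y a : D} (ha : x * y = a ^ 2) (h : IsCoprime x y) : ∃ E : Ideal D, Ideal.span {x} = E ^ 2 := by
  refine ⟨Ideal.span {x} ⊔ Ideal.span {a}, ?_⟩
  have h1 : Ideal.span {x} ⊔ Ideal.span {y} = (⊤ : Ideal D) := by
    obtain ⟨s, t, hst⟩ := h
    rw [Ideal.eq_top_iff_one, ← hst]
    exact Ideal.add_mem _ (Ideal.mul_mem_left _ _ (Ideal.mem_sup_left (Ideal.mem_span_singleton_self _)))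
      (Ideal.mul_mem_left _ _ (Ideal.mem_sup_right (Ideal.mem_span_singleton_self _)))
  rw [pow_two, Ideal.sup_mul, Ideal.mul_sup, Ideal.mul_sup, span_mul a a, ← pow_two a, ← ha, ← span_mul x y,
    mul_comm (Ideal.span {a})]
  calc Ideal.span {x} = Ideal.span {x} * ((Ideal.span {x} ⊔ Ideal.span {y}) ⊔ Ideal.span {a}) := by
        rw [h1, top_sup_eq, Ideal.mul_top]
    _ = _ := by
        rw [Ideal.mul_sup, Ideal.mul_sup]
        apply le_antisymm
        · refine sup_le (sup_le ?_ ?_) ?_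
          · exact le_sup_of_le_left le_sup_left
          · exact le_sup_of_le_right le_sup_right
          · exact le_sup_of_le_left le_sup_right
        · refine sup_le (sup_le ?_ ?_) (sup_le ?_ ?_)
          · exact le_sup_of_le_left le_sup_left
          · exact le_sup_right
          · exact le_sup_right
          · exact le_sup_of_le_left le_sup_right
end gen

variable {p : ℕ} [hp : Fact p.Prime] {R S : Type u} [CommRing R] [IsDedekindDomain R] [Module.Free ℤ R]
    [Module.Finite ℤ R] [CharZero R] [CommRing S] [IsDedekindDomain S] [Module.Free ℤ S]
    [Module.Finite ℤ S] [CharZero S] [Algebra R S]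

namespace Tower
variable (T : Tower p R S)
include T
local notation "ι" => algebraMap R S

/-- `-u (w + c)` is a square -/
lemma sq_wc {u : R} (hu : u * T.τ u = -1) (hpos : 0 < T.φ2 u) {a c : ℤ} (hac : a ^ 2 + c ^ 2 = p) (hc : Even c) :
    ∃ s : R, s ^ 2 = - u * (T.w + c) := by
  have hpp := hp.out
  have hpI : Prime (p : ℤ) := Nat.prime_iff_prime_int.1 hpp
  obtain ⟨m, hm1, hm2, hm3⟩ := T.pm1
  have hp0 : (0 : ℤ) < p := by exact_mod_cast hpp.pos
  have ha0 : a ≠ 0 := by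
    rintro rfl
    apply hpI.irreducible.not_isSquare
    exact ⟨c, by rw [← hac]; ring⟩
  have hao : Odd a := by
    rw [← Int.not_even_iff_odd]
    intro hae
    have h1 : Even ((p : ℤ)) := by
      rw [← hac]; exact (hae.pow_of_ne_zero two_ne_zero).add (hc.pow_of_ne_zero two_ne_zero)
    rw [hm3] at h1
    push_cast at h1
    rcases h1 with ⟨k, hk⟩
    omega
  have hpa : ¬ (p : ℤ) ∣ a := by
    intro h
    have h1 : (p : ℤ) ^ 2 ∣ a ^ 2 := pow_dvd_pow_of_dvd h 2
    have h2 : (p : ℤ) ^ 2 ≤ a ^ 2 := Int.le_of_dvd (by positivity) h1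
    have h3 : (1 : ℤ) < p := by exact_mod_cast hpp.one_lt
    nlinarith [sq_nonneg c]
  have hcop : IsCoprime (a ^ 2 : ℤ) (4 * p) := by
    apply IsCoprime.pow_left
    apply IsCoprime.mul_right
    · have : IsCoprime a (2 : ℤ) := by
        obtain ⟨k, hk⟩ := hao
        exact ⟨1, -k, by rw [hk]; ring⟩
      have := this.pow_right (n := 2)
      norm_num at this
      exact this
    · exact ((hpI.coprime_iff_not_dvd).2 hpa).symm
  have hw2 : (a : R) ^ 2 + (c : R) ^ 2 = T.w ^ 2 := by
    rw [T.w_sq]; exact_mod_cast congrArg (Int.cast (R := R)) hac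
  have hcopR : IsCoprime (T.w + c) (T.w - c) := by
    obtain ⟨s, t, hst⟩ := hcop
    have hst' := congrArg (Int.cast (R := R)) hst
    push_cast at hst'
    rw [← T.w_sq] at hst'
    refine ⟨s * (T.w - c) + t * 2 * T.w, t * 2 * T.w, ?_⟩
    linear_combination hst' - s * hw2
  obtain ⟨E, hE⟩ := sq_of_coprime (x := T.w + c) (y := T.w - c) (a := (a : R)) (by linear_combination -hw2) hcopR
  have hun : IsUnit u := T.unit_of_norm (n := -1) (by rw [hu]; simp) (Or.inr rfl)
  have h2w : T.φ2 T.w ^ 2 = (p : ℝ) := by rw [← map_pow, T.w_sq, map_natCast]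
  have hlt : T.φ2 T.w + c < 0 := by
    have hcl : (c : ℝ) ^ 2 < T.φ2 T.w ^ 2 := by
      rw [h2w]
      have : c ^ 2 < (p : ℤ) := by
        have : 0 < a ^ 2 := by positivity
        linarith
      exact_mod_cast this
    have := abs_lt_of_sq_lt_sq' (by rwa [← neg_sq (T.φ2 T.w)] at hcl) (by linarith [T.φ2_w])
    linarith [this.2]
  obtain ⟨s, hs⟩ := T.isSquare_of_pos (t := - u * (T.w + c)) (m := a) ha0 (by
      simp only [map_mul, map_neg, map_add, map_intCast]
      nlinarith) (by
      simp only [map_mul, map_neg, map_add, map_intCast, T.τ_w]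
      push_cast
      linear_combination (T.w + c) * (-T.w + c) * hu - hw2) (D := E) (by
      rw [← hE, Ideal.span_singleton_mul_left_unit hun.neg])
  exact ⟨s, by rw [hs]; ring⟩

/-- Lemma Q -/
lemma lemmaQ {u : R} (hu : u * T.τ u = -1) (hpos : 0 < T.φ2 u) {q : Ideal R} (hq : q.IsPrime) (hq0 : q ≠ ⊥)
    (h2 : (2 : R) ∉ q) (hw : T.w ∉ q) (hN : ((q.absNorm : ℕ) : ZMod p) ^ ((p - 1) / 2) = 1)
    {z t : R} (ht : t ∉ q) (hz : z ^ 2 + u * T.w * t ^ 2 ∈ q) :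
    ((q.absNorm : ℕ) : ZMod p) ^ ((p - 1) / 4) = 1 := by
  obtain ⟨m, hm1, hm2, hm3⟩ := T.pm1
  have h8 : 8 ∣ p - 1 := ⟨2 * m, by omega⟩
  obtain ⟨χ, hχ, hJ, hac, hc⟩ := exists_chi p h8
  set a := (jacobiSum χ χ).re with ha
  set c := (jacobiSum χ χ).im
  have hmax : q.IsMaximal := hq.isMaximal hq0
  letI : Field (R ⧸ q) := Ideal.Quotient.field q
  have hf : q.absNorm ≠ 0 := by rwa [Ne, Ideal.absNorm_eq_zero_iff]
  rw [Ideal.absNorm_apply, Submodule.cardQuot_apply] at hf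
  haveI : Finite (R ⧸ q) := Nat.finite_of_card_ne_zero hf
  letI : Fintype (R ⧸ q) := Fintype.ofFinite _
  have hcard : q.absNorm = Fintype.card (R ⧸ q) := by
    rw [Ideal.absNorm_apply, Submodule.cardQuot_apply, Nat.card_eq_fintype_card]
  let π := Ideal.Quotient.mk q
  have hπ : ∀ x, π x = 0 ↔ x ∈ q := fun x => Ideal.Quotient.eq_zero_iff_mem
  have h2' : (2 : R ⧸ q) ≠ 0 := by
    have := (hπ 2).not.2 h2
    rwa [map_ofNat] at this
  have hw' : π T.w ≠ 0 := (hπ _).not.2 hw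
  have ht' : π t ≠ 0 := (hπ _).not.2 ht
  have hw2 : π T.w ^ 2 = (p : R ⧸ q) := by rw [← map_pow, T.w_sq, map_natCast]
  have hpF : (p : R ⧸ q) ≠ 0 := by rw [← hw2]; exact pow_ne_zero _ hw'
  have hacF : (a : R ⧸ q) ^ 2 + (c : R ⧸ q) ^ 2 = π T.w ^ 2 := by
    rw [hw2]; exact_mod_cast congrArg (Int.cast (R := R ⧸ q)) hac
  rw [hcard] at hN ⊢
  have hz' : (π z / π t) ^ 2 = - π u * π T.w := by
    have := (hπ _).2 hz
    simp only [map_add, map_mul, map_pow] at this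
    rw [div_pow, div_eq_iff (pow_ne_zero _ ht')]
    linear_combination this
  obtain ⟨a', ha', hwa⟩ : ∃ a' : R ⧸ q, (a' = a ∨ a' = -a) ∧ π T.w + a' ≠ 0 := by
    by_cases h : π T.w + a = 0
    · refine ⟨-a, Or.inr rfl, fun h' => ?_⟩
      have : 2 * π T.w = 0 := by linear_combination h + h'
      exact mul_ne_zero h2' hw' this
    · exact ⟨a, Or.inl rfl, h⟩
  obtain ⟨c', hc', hwc⟩ : ∃ c' : ℤ, (c' = c ∨ c' = -c) ∧ π T.w + c' ≠ 0 := by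
    by_cases h : π T.w + c = 0
    · refine ⟨-c, Or.inr rfl, fun h' => ?_⟩
      push_cast at h'
      have : 2 * π T.w = 0 := by linear_combination h + h'
      exact mul_ne_zero h2' hw' this
    · exact ⟨c, Or.inl rfl, h⟩
  obtain ⟨s, hs⟩ := T.sq_wc hu hpos (a := a) (c := c') (by rcases hc' with rfl | rfl <;> rw [← hac]; ring)
    (by rcases hc' with rfl | rfl; exacts [hc, hc.neg])
  have hun : IsUnit u := T.unit_of_norm (n := -1) (by rw [hu]; simp) (Or.inr rfl)
  have hsπ : π s ^ 2 = - π u * (π T.w + c') := by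
    rw [← map_pow, hs]; simp
  have hs0 : π s ≠ 0 := by
    intro h
    rw [h, zero_pow two_ne_zero] at hsπ
    exact mul_ne_zero (neg_ne_zero.2 (hun.map π).ne_zero) hwc hsπ.symm
  have hsq : π T.w ^ 2 = a' ^ 2 + (c' : R ⧸ q) ^ 2 := by
    rw [← hacF]
    rcases ha' with rfl | rfl <;> rcases hc' with h | h <;> rw [h] <;> push_cast <;> ring
  have hρ : (π z / π t * (π T.w + a' + c') / π s) ^ 2 = 2 * π T.w * (π T.w + a') := by
    rw [div_pow, div_eq_iff (pow_ne_zero _ hs0), mul_pow, hz', hsπ]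
    linear_combination π u * π T.w * hsq
  have hρ0 : (π z / π t * (π T.w + a' + c') / π s) ≠ 0 := by
    intro h
    rw [h, zero_pow two_ne_zero] at hρ
    exact mul_ne_zero (mul_ne_zero h2' hw') hwa hρ.symm
  rcases ha' with h | h
  · exact quartic_criterion p h8 χ hχ hJ (R ⧸ q) h2' hpF hN (π T.w) hw2 _ hρ0 (by rw [hρ, h, ha])
  · exact quartic_criterion p h8 χ hχ hJ (R ⧸ q) h2' hpF hN (-π T.w) (by rw [neg_sq, hw2]) _ hρ0 (by rw [hρ, h, ha]; ring)

end Tower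
end PQ

namespace PQ
universe u
variable {p : ℕ} [hp : Fact p.Prime] {R S : Type u} [CommRing R] [IsDedekindDomain R] [Module.Free ℤ R]
    [Module.Finite ℤ R] [CharZero R] [CommRing S] [IsDedekindDomain S] [Module.Free ℤ S]
    [Module.Finite ℤ S] [CharZero S] [Algebra R S]

namespace Tower
variable (T : Tower p R S)
include T
local notation "ι" => algebraMap R S

/-- norms of ideals of `R` are quadratic residues -/
lemma absNorm_qr [Finite (ClassGroup R)] {q : Ideal R} (hq0 : q ≠ ⊥) (hqp : ¬ p ∣ q.absNorm) :
    ((q.absNorm : ℕ) : ZMod p) ^ ((p - 1) / 2) = 1 ∧ (((q.absNorm : ℕ) : ZMod p) ^ ((p - 1) / 4)) ^ 2 = 1 := by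
  obtain ⟨m, hm1, hm2, hm3⟩ := T.pm1
  have hne : ((q.absNorm : ℕ) : ZMod p) ≠ 0 := by rwa [Ne, ZMod.natCast_eq_zero_iff]
  have e1 : (p - 1) / 2 = (p - 1) / 4 * 2 := by omega
  rw [e1, pow_mul]
  suffices h : (((q.absNorm : ℕ) : ZMod p) ^ ((p - 1) / 4)) ^ 2 = 1 from ⟨h, h⟩
  obtain ⟨h, ho, hh⟩ := T.exists_h
  obtain ⟨d, hd0, hd⟩ := hh q hq0
  have hρ : T.ρk d ≠ 0 := by
    intro hd'
    obtain ⟨n, hn⟩ := T.nmR d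
    have h1 := T.nm_rho hn
    rw [hd', zero_pow two_ne_zero, ZMod.intCast_zmod_eq_zero_iff_dvd] at h1
    have h2 : p ∣ q.absNorm ^ h := by
      rw [← map_pow, hd, T.normR hn]
      exact Int.natCast_dvd.1 h1
    exact hqp (hp.out.dvd_of_dvd_pow h2)
  apply eq_one_of_odd_pow (h := h) _ ho
  · have := T.absNorm_span_q d
    rw [← hd, map_pow] at this
    push_cast at this
    calc _ = (((q.absNorm : ZMod p) ^ h) ^ ((p - 1) / 4)) ^ 2 := by
            rw [← pow_mul, ← pow_mul, ← pow_mul, ← pow_mul]; congr 1; ring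
      _ = ((T.ρk d ^ 4)) ^ ((p - 1) / 4) := by rw [this, ← pow_mul, ← pow_mul, ← pow_mul]; congr 1; ring
      _ = 1 := T.quartic_of_pow hρ
  · rw [← pow_mul, ← pow_mul]
    calc _ = ((((q.absNorm : ℕ) : ZMod p)) ^ (p - 1)) ^ 2 := by rw [← pow_mul]; congr 1; omega
      _ = 1 := by rw [ZMod.pow_card_sub_one_eq_one hne, one_pow]

lemma absNorm_two {q : Ideal R} (hq : q.IsPrime) (hq0 : q ≠ ⊥) (h2 : (2 : R) ∈ q) : q.absNorm = 2 := by
  obtain ⟨m, hm1, hm2, hm3⟩ := T.pm1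
  have h1 : T.ω * (1 - T.ω) = 2 * (-2 * m) := by
    have h := T.two_ω
    have hw : T.w ^ 2 = 16 * m + 1 := by
      rw [T.w_sq]; exact_mod_cast congrArg (Nat.cast (R := R)) hm3
    have h4 : (4 : R) ≠ 0 := by norm_num
    apply mul_left_cancel₀ h4
    linear_combination (2 - 2 * T.ω - (1 + T.w)) * h - hw
  have h3 : T.ω * (1 - T.ω) ∈ q := by rw [h1]; exact Ideal.mul_mem_right _ _ h2
  rcases hq.mem_or_mem h3 with h | h
  · exact T.absNorm_ell_of hq.ne_top hq0 h2 h
  · rw [← absNorm_map_equiv T.τ]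
    have hτ : T.τ (1 - T.ω) = T.ω := by
      have h5 : (2 : R) ≠ 0 := two_ne_zero
      apply mul_left_cancel₀ h5
      have h6 := congrArg T.τ T.two_ω
      simp only [map_mul, map_add, map_one, map_ofNat, T.τ_w] at h6
      rw [map_sub, map_one]
      linear_combination -h6 - T.two_ω
    apply T.absNorm_ell_of
    · intro h
      apply hq.ne_top
      have := congrArg (Ideal.comap T.τ) h
      rwa [Ideal.comap_map_of_bijective _ T.τ.bijective, Ideal.comap_top] at this
    · rwa [Ne, Ideal.map_eq_bot_iff_of_injective T.τ.injective]
    · have := Ideal.mem_map_of_mem T.τ h2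
      rwa [map_ofNat] at this
    · have := Ideal.mem_map_of_mem T.τ h
      rwa [hτ] at this

/-- Case where the unit has norm `-1`. -/
lemma case_neg [Finite (ClassGroup R)] (h2q : (2 : ZMod p) ^ ((p - 1) / 4) = 1) {A : Ideal S} {b u : R} {γ : S}
    (hγ : A ^ 2 = Ideal.span {γ}) (hργ : T.ρ γ ≠ 0)
    (hgg : γ * T.σ γ = ι u * ι b ^ 2) (hpos : 0 < T.φ2 u) (hu : u * T.τ u = -1) :
    (T.ρk b ^ 2) ^ ((p - 1) / 4) = 1 := by
  obtain ⟨m, hm1, hm2, hm3⟩ := T.pm1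
  have hun : IsUnit u := T.unit_of_norm (n := -1) (by rw [hu]; simp) (Or.inr rfl)
  obtain ⟨x, hx⟩ := T.trS γ
  obtain ⟨y, hy⟩ := T.dfS γ
  have hρx : T.ρk x = 2 * T.ρ γ := by
    rw [ρk_apply, ← hx, map_add, T.ρ_σ]; ring
  have hρx0 : T.ρk x ≠ 0 := by rw [hρx]; exact mul_ne_zero T.two_ne_zmod hργ
  have hx0 : x ≠ 0 := by rintro rfl; exact hρx0 (map_zero _)
  have heq : T.w * x ^ 2 - y ^ 2 = 4 * u * T.w * b ^ 2 := by
    apply T.inj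
    simp only [map_sub, map_mul, map_pow, map_ofNat]
    rw [← hx, ← hy, ← T.r_sq]
    linear_combination 4 * T.r ^ 2 * hgg
  have hγσ : (A.map T.σ) ^ 2 = Ideal.span {T.σ γ} := by rw [← Ideal.map_pow, hγ, T.map_σ_span]
  let f : Ideal R →* ZMod p :=
    { toFun := fun I => ((I.absNorm : ℕ) : ZMod p) ^ ((p - 1) / 4)
      map_one' := by simp
      map_mul' := fun I J => by rw [map_mul, Nat.cast_mul, mul_pow] }
  have hfx : f (Ideal.span {x}) = 1 := by
    apply prod_one f (span_ne hx0)
    intro q e hq hq0 hqx hqe hqe1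
    have hqp : ¬ p ∣ q.absNorm := fun h =>
      T.absNorm_span_ne hρx0 (h.trans (Ideal.absNorm_dvd_absNorm_of_le (Ideal.dvd_iff_le.1 hqx)))
    obtain ⟨hqr, hf2⟩ := T.absNorm_qr hq0 hqp
    change (((q.absNorm : ℕ) : ZMod p) ^ ((p - 1) / 4)) ^ e = 1
    by_cases h2 : (2 : R) ∈ q
    · rw [T.absNorm_two hq hq0 h2, Nat.cast_ofNat, h2q, one_pow]
    rcases Nat.even_or_odd e with he | ho
    · obtain ⟨k, rfl⟩ := he
      rw [← two_mul, pow_mul, hf2, one_pow]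
    have hqP := Ideal.prime_of_isPrime hq0 hq
    have hwq : T.w ∉ q := by
      intro h
      have h1 := Ideal.absNorm_dvd_absNorm_of_le ((Ideal.span_singleton_le_iff_mem q).2 h)
      rw [T.absNorm_w, Nat.dvd_prime hp.out, Ideal.absNorm_eq_one_iff] at h1
      rcases h1 with h1 | h1
      · exact hq.ne_top h1
      · exact hqp (by rw [h1])
    have hxe : x ∈ q ^ e := by
      rw [← Ideal.span_singleton_le_iff_mem, ← Ideal.dvd_iff_le]; exact hqe
    by_cases hye : y ∈ q ^ e
    · exfalso
      have hqm0 := T.map_ne_bot hq0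
      have hqmt : q.map ι ≠ ⊤ := by
        intro h
        have h1 := T.absNorm_map q
        rw [h, Ideal.absNorm_top] at h1
        have : q.absNorm = 1 := by
          have := h1.symm
          simpa using this
        exact hq.ne_top (Ideal.absNorm_eq_one_iff.1 this)
      obtain ⟨Q, hQP, hQ, hQq⟩ := exists_prime_dvd_ideal hqm0 hqmt
      have hQ0 : Q ≠ ⊥ := hQP.ne_zero
      have hcomap := T.comap_eq hq hq0 hQ hQq
      have hle : ∀ z, z ∈ q ^ e → ι z ∈ Q ^ e := by
        intro z hz
        have h1 := Ideal.mem_map_of_mem ι hz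
        rw [Ideal.map_pow] at h1
        exact Ideal.pow_right_mono (Ideal.dvd_iff_le.1 hQq) e h1
      have hmem : ∀ z, ι z ∈ Q → z ∈ q := by
        intro z hz; rw [← hcomap]; exact hz
      have h2r : 2 * T.r ∉ Q := by
        intro h
        rcases hQ.mem_or_mem h with h | h
        · exact h2 (hmem 2 (by rwa [map_ofNat]))
        · exact hwq (hmem T.w (by rw [← T.r_sq, pow_two]; exact Ideal.mul_mem_left _ _ h))
      have hg1 : γ ∈ Q ^ e := by
        apply mem_pow_of_mul hQ hQ0 h2r
        rw [show 2 * T.r * γ = T.r * ι x + ι y by rw [← hx, ← hy]; ring]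
        exact Ideal.add_mem _ (Ideal.mul_mem_left _ _ (hle x hxe)) (hle y hye)
      have hg2 : T.σ γ ∈ Q ^ e := by
        apply mem_pow_of_mul hQ hQ0 h2r
        rw [show 2 * T.r * T.σ γ = T.r * ι x - ι y by rw [← hx, ← hy]; ring]
        exact Ideal.sub_mem _ (Ideal.mul_mem_left _ _ (hle x hxe)) (hle y hye)
      rw [← Ideal.span_singleton_le_iff_mem, ← Ideal.dvd_iff_le] at hg1 hg2
      rw [← hγ] at hg1
      rw [← hγσ] at hg2
      have hg1' := odd_pow_dvd_sq hQ hQ0 ho hg1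
      have hg2' := odd_pow_dvd_sq hQ hQ0 ho hg2
      rw [hγ, Ideal.dvd_iff_le, Ideal.span_singleton_le_iff_mem] at hg1'
      rw [hγσ, Ideal.dvd_iff_le, Ideal.span_singleton_le_iff_mem] at hg2'
      have hxQ : ι x ∈ Q ^ (e + 1) := by rw [← hx]; exact Ideal.add_mem _ hg1' hg2'
      obtain ⟨C, hC⟩ := hqe
      obtain ⟨D, hD⟩ := hQq
      have hxQ' : Q ^ (e + 1) ∣ (Ideal.span {x}).map ι := by
        rw [map_ι_span, Ideal.dvd_iff_le, Ideal.span_singleton_le_iff_mem]; exact hxQ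
      rw [hC, Ideal.map_mul, Ideal.map_pow, hD, mul_pow, mul_assoc, pow_succ] at hxQ'
      have h3 := (mul_dvd_mul_iff_left (pow_ne_zero _ hQ0)).1 hxQ'
      rcases hQP.dvd_or_dvd h3 with h | h
      · have h4 := hQP.dvd_of_dvd_pow h
        have h5 : Q ^ 2 ∣ q.map ι := by rw [hD, pow_two]; exact mul_dvd_mul_left _ h4
        rcases (T.ram hq hq0 hQ hQ0 h5).2 with ⟨-, h6⟩ | ⟨h6, -⟩
        · exact hwq (by rw [h6]; exact Ideal.mem_span_singleton_self _)
        · exact h2 (by rw [h6]; exact T.two_mem_ell)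
      · have h4 : C ≤ q := by
          rw [← hcomap]; exact Ideal.map_le_iff_le_comap.1 (Ideal.dvd_iff_le.1 h)
        apply hqe1
        rw [hC, pow_succ]
        exact mul_dvd_mul_left _ (Ideal.dvd_iff_le.2 h4)
    · classical
      have hex : ∃ f, y ∉ q ^ (f + 1) := by
        refine ⟨e, fun h => hye (Ideal.pow_le_pow_right (by omega) h)⟩
      set f := Nat.find hex with hf
      have hf1 : y ∉ q ^ (f + 1) := Nat.find_spec hex
      have hf0 : y ∈ q ^ f := by
        rcases Nat.eq_zero_or_pos f with h | h
        · rw [h, pow_zero, Ideal.one_eq_top]; exact Submodule.mem_top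
        · have := Nat.find_min hex (m := f - 1) (by omega)
          rw [not_not, Nat.sub_add_cancel h] at this
          exact this
      have hfe : f < e := by
        by_contra hcon
        exact hye (Ideal.pow_le_pow_right (not_lt.1 hcon) hf0)
      have hx2 : x ^ 2 ∈ q ^ (2 * f + 1) := by
        have h1 := Ideal.pow_mem_pow hxe 2
        rw [← pow_mul] at h1
        exact Ideal.pow_le_pow_right (by omega) h1
      have hy2 : y ^ 2 ∈ q ^ (2 * f) := by
        have h1 := Ideal.pow_mem_pow hf0 2
        rw [← pow_mul] at h1
        rwa [mul_comm]
      have h4uw : 4 * u * T.w ∉ q := by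
        intro h
        rcases hq.mem_or_mem h with h | h
        · rcases hq.mem_or_mem h with h | h
          · rw [show (4 : R) = 2 * 2 by norm_num] at h
            rcases hq.mem_or_mem h with h | h <;> exact h2 h
          · exact hq.ne_top (Ideal.eq_top_of_isUnit_mem _ h hun)
        · exact hwq h
      have hb2 : b ^ 2 ∈ q ^ (2 * f) := by
        apply mem_pow_of_mul hq hq0 h4uw
        rw [← heq]
        exact Ideal.sub_mem _ (Ideal.mul_mem_left _ _ (Ideal.pow_le_pow_right (by omega) hx2)) hy2
      have hbf : b ∈ q ^ f := by
        rw [← Ideal.span_singleton_le_iff_mem, ← Ideal.dvd_iff_le] at hb2 ⊢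
        apply ideal_sq_dvd
        rwa [span_sq, ← pow_mul, mul_comm]
      obtain ⟨b1, b2, hb2m, hb⟩ := Ideal.exists_mul_add_mem_pow_succ hq0 y b hf0 hf1 hbf
      have hkey : y ^ 2 * (1 + u * T.w * (2 * b1) ^ 2) ∈ q ^ (2 * f + 1) := by
        have h5 : y ^ 2 * (1 + u * T.w * (2 * b1) ^ 2) = T.w * x ^ 2 - 4 * u * T.w * (2 * b1 * (y * b2) + b2 * b2) := by
          rw [← hb] at heq
          linear_combination -heq
        rw [h5]
        have h6 : y * b2 ∈ q ^ (2 * f + 1) := by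
          rw [show 2 * f + 1 = f + (f + 1) by ring, pow_add]; exact Ideal.mul_mem_mul hf0 hb2m
        have h7 : b2 * b2 ∈ q ^ (2 * f + 1) := by
          have := Ideal.mul_mem_mul hb2m hb2m
          rw [← pow_add] at this
          exact Ideal.pow_le_pow_right (by omega) this
        exact Ideal.sub_mem _ (Ideal.mul_mem_left _ _ hx2)
          (Ideal.mul_mem_left _ _ (Ideal.add_mem _ (Ideal.mul_mem_left _ _ h6) h7))
      have hfin := Ideal.mem_prime_of_mul_mem_pow hq0 (sq_not_mem hq hq0 hf0 hf1) hkey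
      have ht : 2 * b1 ∉ q := by
        intro h
        have h8 : u * T.w * (2 * b1) ^ 2 ∈ q := by
          rw [pow_two]; exact Ideal.mul_mem_left _ _ (Ideal.mul_mem_left _ _ h)
        have h9 := Ideal.sub_mem _ hfin h8
        rw [add_sub_cancel_right] at h9
        exact hq.ne_top ((Ideal.eq_top_iff_one _).2 h9)
      rw [T.lemmaQ hu hpos hq hq0 h2 hwq hqr (z := 1) ht (by rwa [one_pow]), one_pow]
  have h1 : (T.ρk x ^ 2) ^ ((p - 1) / 4) = 1 := by
    rw [← T.absNorm_span_q]; exact hfx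
  have h2 : T.ρ γ ^ 2 = T.ρk u * T.ρk b ^ 2 := by
    have := congrArg T.ρ hgg
    rw [map_mul, map_mul, map_pow, T.ρ_σ] at this
    rw [pow_two, this]; rfl
  have h3 : T.ρk u ^ 2 = -1 := by
    have := congrArg T.ρk hu
    rw [map_mul, T.ρk_τ, map_neg, map_one] at this
    rw [pow_two, this]
  have h4 : T.ρk u ^ ((p - 1) / 4) = 1 := by
    rw [show (p - 1) / 4 = 2 * (2 * m) by omega, pow_mul, h3, pow_mul, neg_one_sq, one_pow]
  rw [hρx, mul_pow, h2, mul_pow, mul_pow, h4, one_mul, ← pow_mul, mul_comm 2, pow_mul, h2q, one_pow, one_mul] at h1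
  exact h1

/-- 2 quartic -/
lemma quartic [Finite (ClassGroup R)] (h2 : (2 : ZMod p) ^ ((p - 1) / 4) = 1) (c : ClassGroup S) (hc : c ^ 2 = 1) :
    T.chiC c = 1 := by
  obtain ⟨A, hA, b, u, γ, hcl, hγ, hγ0, hb, hργ, hchi, hu, hgg, hpos⟩ := T.setup c hc
  rcases T.norm_unit hu with h | h
  · obtain ⟨e, he⟩ := T.unit_sq h hpos
    rcases T.case_sq hA hγ (m := e * b) (by rw [hgg, he, map_mul, map_mul]; ring) with h | h
    · rw [← hcl, h, map_one]
    · rw [← hcl, T.chiC_cl, h, h2]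
  · rw [← hcl, T.chiC_cl, hchi]
    exact T.case_neg h2 hγ hργ hgg hpos h

end Tower
end PQ

namespace PQ
universe u

/-- The auxiliary prime from the theorem of Dirichlet. -/
lemma exists_aux_prime (p : ℕ) [hp : Fact p.Prime] (hmod : p % 16 = 1) :
    ∃ q : ℕ, q.Prime ∧ q % 4 = 3 ∧ q ≠ p ∧ (q : ZMod p) ^ ((p - 1) / 4) = -1 ∧ ∃ s : ZMod q, s ^ 4 = p := by
  have hpp := hp.out
  have hp2 : p ≠ 2 := by rintro rfl; omega
  obtain ⟨g, hg⟩ := FiniteField.exists_nonsquare (F := ZMod p) (by rwa [ZMod.ringChar_zmod_n])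
  have hg0 : g ≠ 0 := by rintro rfl; exact hg ⟨0, by simp⟩
  have hg1 : g ^ (p / 2) = -1 :=
    (ZMod.pow_div_two_eq_neg_one_or_one p hg0).resolve_left (fun h => hg ((ZMod.euler_criterion p hg0).2 h))
  have hcop : Nat.Coprime 4 p := by
    have : Nat.Coprime 2 p := (Nat.coprime_primes Nat.prime_two hpp).2 hp2.symm
    exact this.pow_left 2
  obtain ⟨x, hx4, hxp⟩ := Nat.chineseRemainder hcop 3 (g ^ 2).val
  have hxz : (x : ZMod p) = g ^ 2 := by
    have := (ZMod.natCast_eq_natCast_iff _ _ _).2 hxp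
    rwa [ZMod.natCast_zmod_val] at this
  have hxc : Nat.Coprime x (4 * p) := by
    apply Nat.Coprime.mul_right
    · have : x % 4 = 3 := hx4
      have h1 : Nat.Coprime x 2 := by
        rw [Nat.coprime_comm, Nat.Prime.coprime_iff_not_dvd Nat.prime_two]; omega
      exact h1.pow_right 2
    · rw [Nat.coprime_comm, Nat.Prime.coprime_iff_not_dvd hpp, ← ZMod.natCast_eq_zero_iff, hxz]
      exact pow_ne_zero _ hg0
  haveI : NeZero (4 * p) := ⟨by have := hpp.pos; omega⟩
  obtain ⟨q, hq1, hq, hqx⟩ := Nat.forall_exists_prime_gt_and_eq_mod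
    (q := 4 * p) (a := (x : ZMod (4 * p))) ((ZMod.isUnit_iff_coprime x (4 * p)).2 hxc) (p + 2)
  have hqx' := (ZMod.natCast_eq_natCast_iff _ _ _).1 hqx
  have hq4 : q % 4 = 3 := (hqx'.of_mul_right p).trans hx4
  have hqp : (q : ZMod p) = g ^ 2 := by
    rw [← hxz, ZMod.natCast_eq_natCast_iff]; exact hqx'.of_mul_left 4
  refine ⟨q, hq, hq4, by omega, ?_, ?_⟩
  · rw [hqp, ← pow_mul, ← hg1]; congr 1; omega
  · haveI : Fact q.Prime := ⟨hq⟩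
    have h1 : IsSquare (p : ZMod q) :=
      (ZMod.exists_sq_eq_prime_iff_of_mod_four_eq_one (p := p) (q := q) (by omega) (by omega)).1
        ⟨g, by rw [hqp, pow_two]⟩
    obtain ⟨t, ht⟩ := h1
    have ht0 : t ≠ 0 := by
      rintro rfl
      rw [mul_zero, ZMod.natCast_eq_zero_iff, Nat.prime_dvd_prime_iff_eq hq hpp] at ht
      omega
    have hodd : Odd (q / 2) := by rw [Nat.odd_iff]; omega
    rcases ZMod.pow_div_two_eq_neg_one_or_one q ht0 with h | h
    · obtain ⟨s, hs⟩ := (ZMod.euler_criterion q ht0).2 h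
      exact ⟨s, by rw [ht, hs]; ring⟩
    · obtain ⟨s, hs⟩ := (ZMod.euler_criterion q (neg_ne_zero.2 ht0)).2 (by
        rw [hodd.neg_pow, h, neg_neg])
      exact ⟨s, by rw [ht, ← neg_mul_neg, hs]; ring⟩

variable {p : ℕ} [hp : Fact p.Prime] {R S : Type u} [CommRing R] [IsDedekindDomain R] [Module.Free ℤ R]
    [Module.Finite ℤ R] [CharZero R] [CommRing S] [IsDedekindDomain S] [Module.Free ℤ S]
    [Module.Finite ℤ S] [CharZero S] [Algebra R S]

namespace Tower
variable (T : Tower p R S)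
include T
local notation "ι" => algebraMap R S

lemma not_top {q : ℕ} (hq : q.Prime) {s : ℤ} (hs : (q : ℤ) ∣ s ^ 4 - p) :
    Ideal.span {(q : S)} ⊔ Ideal.span {T.r - s} ≠ ⊤ := by
  intro h
  rw [Ideal.eq_top_iff_one, Submodule.mem_sup] at h
  obtain ⟨a, ha, b, hb, hab⟩ := h
  obtain ⟨α, rfl⟩ := Ideal.mem_span_singleton.1 ha
  obtain ⟨β, rfl⟩ := Ideal.mem_span_singleton.1 hb
  obtain ⟨k, hk⟩ := hs
  obtain ⟨y, hy⟩ := T.nmS β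
  obtain ⟨t, ht⟩ := T.trS α
  obtain ⟨n, hn⟩ := T.nmS α
  obtain ⟨m, hm⟩ := T.nmR y
  have h1 : (s ^ 2 - T.w) * y = 1 - q * (t - q * n) := by
    apply T.inj
    have h2 := congrArg T.σ hab
    simp only [map_add, map_mul, map_sub, map_one, map_natCast, map_intCast, T.σ_r] at h2
    simp only [map_mul, map_sub, map_one, map_natCast, map_intCast, map_pow]
    rw [← hy, ← ht, ← hn, ← T.r_sq]
    linear_combination (1 - q * T.σ α) * hab + (T.r - s) * β * h2
  have h2 := congrArg T.τ h1
  simp only [map_add, map_mul, map_sub, map_one, map_natCast, map_intCast, T.τ_w, map_pow] at h2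
  have hk' : (s : R) ^ 4 - T.w ^ 2 = q * k := by
    rw [T.w_sq]; exact_mod_cast congrArg (Int.cast (R := R)) hk
  have h3 : ((q : ℤ) : R) ∣ ((1 : ℤ) : R) := by
    refine ⟨k * (y * T.τ y) + (t - q * n) + (T.τ t - q * T.τ n) - q * (t - q * n) * (T.τ t - q * T.τ n), ?_⟩
    push_cast
    linear_combination (-(s ^ 2 + T.w) * T.τ y) * h1 - (1 - q * (t - q * n)) * h2 + y * T.τ y * hk'
  have h4 := T.int_dvd h3
  have : (q : ℤ) = 1 := Int.eq_one_of_dvd_one (by positivity) h4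
  exact hq.one_lt.ne' (by exact_mod_cast this)

lemma exists_chi_neg : ∃ c : ClassGroup S, T.chiC c = -1 := by
  obtain ⟨q, hq, hq4, hqp, hchi, s, hs⟩ := exists_aux_prime p T.hmod
  haveI : Fact q.Prime := ⟨hq⟩
  obtain ⟨s, rfl⟩ := ZMod.intCast_surjective s
  have hs' : (q : ℤ) ∣ s ^ 4 - p := by
    rw [← ZMod.intCast_zmod_eq_zero_iff_dvd]
    push_cast
    rw [hs, sub_self]
  obtain ⟨Q, hQ, hle⟩ := Ideal.exists_le_maximal _ (T.not_top hq hs')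
  have hqQ : (q : S) ∈ Q := hle (Ideal.mem_sup_left (Ideal.mem_span_singleton_self _))
  have hrQ : T.r - s ∈ Q := hle (Ideal.mem_sup_right (Ideal.mem_span_singleton_self _))
  have hQ0 : Q ≠ ⊥ := by
    rintro rfl
    rw [Ideal.mem_bot] at hqQ
    exact hq.ne_zero (by exact_mod_cast hqQ)
  letI : Field (S ⧸ Q) := Ideal.Quotient.field Q
  let π := Ideal.Quotient.mk Q
  have hq0 : (q : S ⧸ Q) = 0 := by
    have := Ideal.Quotient.eq_zero_iff_mem.2 hqQ
    rwa [map_natCast] at this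
  haveI : CharP (S ⧸ Q) q := ringChar.of_eq (CharP.ringChar_of_prime_eq_zero hq hq0)
  let f : ZMod q →+* S ⧸ Q := ZMod.castHom dvd_rfl _
  have hr : π T.r = f s := by
    have : π (T.r - s) = 0 := Ideal.Quotient.eq_zero_iff_mem.2 hrQ
    rw [map_sub, map_intCast, sub_eq_zero] at this
    rw [this, map_intCast]
  have hw : π (ι T.w) = f (s ^ 2) := by rw [← T.r_sq, map_pow, hr, map_pow]
  have h2q : (2 : ZMod q) ≠ 0 := by
    have : ((2 : ℕ) : ZMod q) ≠ 0 := by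
      rw [Ne, ZMod.natCast_eq_zero_iff]
      intro h
      have := Nat.le_of_dvd (by norm_num) h
      have := hq.two_le
      have h2 : q = 2 := by omega
      rw [h2] at hq4; omega
    exact_mod_cast this
  have hs0 : (s : ZMod q) ≠ 0 := by
    intro h
    rw [h, zero_pow (by norm_num)] at hs
    have := (ZMod.natCast_eq_zero_iff _ _).1 hs.symm
    exact hqp ((Nat.prime_dvd_prime_iff_eq hq hp.out).1 this)
  have hR : ∀ t : R, ∃ z, f z = π (ι t) := by
    intro t
    obtain ⟨a, b, rfl⟩ := T.basis_ω t
    refine ⟨a + b * ((1 + s ^ 2) / 2), ?_⟩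
    have h1 : π (ι T.ω) = f ((1 + s ^ 2) / 2) := by
      have h3 := congrArg (fun x => π (ι x)) T.two_ω
      simp only [map_mul, map_add, map_one, map_ofNat] at h3
      rw [hw] at h3
      have h2 : (2 : S ⧸ Q) ≠ 0 := by
        have := (map_ne_zero f).2 h2q
        rwa [map_ofNat] at this
      rw [map_div₀, map_ofNat, eq_div_iff h2, mul_comm, h3, map_add, map_one]
    simp only [map_add, map_mul, map_intCast, h1]
  have hsurj : Function.Surjective f := by
    intro z
    obtain ⟨x, rfl⟩ := Ideal.Quotient.mk_surjective z
    obtain ⟨t, ht⟩ := T.trS x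
    obtain ⟨y, hy⟩ := T.dfS x
    obtain ⟨t', ht'⟩ := hR t
    obtain ⟨y', hy'⟩ := hR y
    have h1 : 2 * ι T.w * x = ι T.w * ι t + T.r * ι y := by
      rw [← ht, ← hy, ← T.r_sq]; ring
    have h2 := congrArg π h1
    simp only [map_mul, map_add, map_ofNat] at h2
    rw [hw, hr, ← ht', ← hy'] at h2
    refine ⟨(s ^ 2 * t' + s * y') / (2 * s ^ 2), ?_⟩
    have h3 : f (2 * s ^ 2) ≠ 0 := (map_ne_zero f).2 (mul_ne_zero h2q (pow_ne_zero _ hs0))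
    rw [map_div₀, div_eq_iff h3]
    simp only [map_mul, map_add, map_ofNat]
    rw [← h2]
    ring
  have hcard : Q.absNorm = q := by
    rw [Ideal.absNorm_apply, Submodule.cardQuot_apply, ← Nat.card_congr (Equiv.ofBijective f ⟨f.injective, hsurj⟩),
      Nat.card_zmod]
  refine ⟨cl Q hQ0, ?_⟩
  rw [T.chiC_cl, chi_coprime, hcard, hchi]
  rw [hcard]
  intro h
  exact hqp ((Nat.prime_dvd_prime_iff_eq hp.out hq).1 h).symm

lemma neg_one_ne : (-1 : ZMod p) ≠ 1 := by
  intro h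
  apply T.two_ne_zmod
  linear_combination -h

theorem main_iff [Finite (ClassGroup R)] [Finite (ClassGroup S)] :
    (2 ∣ Nat.card (ClassGroup S) ∧ ¬ 4 ∣ Nat.card (ClassGroup S)) ↔ (2 : ZMod p) ^ ((p - 1) / 4) ≠ 1 := by
  obtain ⟨d, hd⟩ := T.exists_chi_neg
  have hne := T.neg_one_ne
  have h2 : 2 ∣ Nat.card (ClassGroup S) := by
    by_contra h
    have ho : Odd (Nat.card (ClassGroup S)) := by rw [← Nat.not_even_iff_odd, even_iff_two_dvd]; exact h
    have h1 : d ^ Nat.card (ClassGroup S) = 1 := pow_card_eq_one'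
    have h3 := congrArg T.chiC h1
    rw [map_pow, hd, ho.neg_one_pow, map_one] at h3
    exact hne h3
  constructor
  · rintro ⟨-, h4⟩ hq
    obtain ⟨m, hm⟩ := h2
    have ho : Odd m := by
      rw [← Nat.not_even_iff_odd, even_iff_two_dvd]
      rintro ⟨k, rfl⟩
      exact h4 ⟨k, by rw [hm]; ring⟩
    have h1 : (d ^ m) ^ 2 = 1 := by
      rw [← pow_mul, mul_comm, ← hm]; exact pow_card_eq_one'
    have h3 := T.quartic hq _ h1
    rw [map_pow, hd, ho.neg_one_pow] at h3
    exact hne h3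
  · intro hq
    refine ⟨h2, fun h4 => ?_⟩
    haveI : Fact (Nat.Prime 2) := ⟨Nat.prime_two⟩
    have key : ∀ s : ClassGroup S, s ≠ 1 → s ^ 4 = 1 → T.chiC s = 1 → False := by
      intro s hs h4 hc
      by_cases h : s ^ 2 = 1
      · exact hq (by rw [← T.nonquartic hq s h hs, hc])
      · refine hq ?_
        rw [← T.nonquartic hq (s ^ 2) (by rw [← pow_mul]; exact h4) h, map_pow, hc, one_pow]
    obtain ⟨H, hH⟩ := Sylow.exists_subgroup_card_pow_prime (G := ClassGroup S) 2 (n := 2) (by simpa using h4)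
    have hH4 : Nat.card H = 4 := by rw [hH]; norm_num
    have hpow : ∀ s ∈ H, s ^ 4 = 1 := by
      intro s hs
      have : (⟨s, hs⟩ : H) ^ Nat.card H = 1 := pow_card_eq_one'
      rw [hH4] at this
      simpa using congrArg Subtype.val this
    have hfin : Finite H := inferInstance
    letI := Fintype.ofFinite H
    classical
    have hlt : Fintype.card ({1, -1} : Finset (ZMod p)) < Fintype.card H := by
      rw [← Nat.card_eq_fintype_card (α := H), hH4, Fintype.card_coe]
      exact lt_of_le_of_lt (Finset.card_le_two) (by norm_num)
    obtain ⟨a, b, hab, hf⟩ := Fintype.exists_ne_map_eq_of_card_lt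
      (fun s : H => (⟨T.chiC s, by
        rcases T.chiC_sq (s : ClassGroup S) with h | h <;> simp [h]⟩ : ({1, -1} : Finset (ZMod p)))) hlt
    have hf' : T.chiC a = T.chiC b := congrArg Subtype.val hf
    refine key (a * (b : ClassGroup S)⁻¹) ?_ (hpow _ (H.mul_mem a.2 (H.inv_mem b.2))) ?_
    · rw [Ne, mul_inv_eq_one]
      exact fun h => hab (Subtype.ext h)
    · rw [map_mul, hf', ← map_mul, mul_inv_cancel, map_one]

end Tower
end PQ

namespace PQ
universe u
section quad
variable {R S : Type*} [CommRing R] [IsDedekindDomain R] [Module.Free ℤ R] [Module.Finite ℤ R] [CharZero R]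
  [CommRing S] [IsDedekindDomain S] [Module.Free ℤ S] [Module.Finite ℤ S] [CharZero S]
  [Algebra R S] [Module.Finite R S] [Module.IsTorsionFree R S]

lemma eq_of_le_of_absNorm_eq (I J : Ideal S) (h : I ≤ J) (h0 : I.absNorm ≠ 0) (hn : I.absNorm = J.absNorm) :
    I = J := by
  obtain ⟨C, hC⟩ := Ideal.dvd_iff_le.2 h
  have : C.absNorm = 1 := by
    have h2 := congrArg Ideal.absNorm hC
    rw [map_mul, hn] at h2
    rw [hn] at h0
    exact (Nat.eq_of_mul_eq_mul_left (Nat.pos_of_ne_zero h0) (by rw [mul_one]; exact h2)).symm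
  rw [Ideal.absNorm_eq_one_iff] at this
  rw [hC, this, Ideal.mul_top]

lemma quad_norm (h2 : Module.finrank R S = 2) (σ : S ≃+* S)
    (hn : ∀ x, algebraMap R S (Algebra.intNorm R S x) = x * σ x) (A : Ideal S) :
    (Ideal.relNorm R A).map (algebraMap R S) = A * A.map σ := by
  by_cases hA : A = ⊥
  · subst hA; simp
  apply eq_of_le_of_absNorm_eq
  · rw [Ideal.map_relNorm, Ideal.span_le]
    rintro _ ⟨x, hx, rfl⟩
    simp only [Function.comp_apply, hn]
    exact Ideal.mul_mem_mul hx (Ideal.mem_map_of_mem _ hx)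
  · rw [Ne, Ideal.absNorm_eq_zero_iff, Ideal.map_eq_bot_iff_of_injective (FaithfulSMul.algebraMap_injective R S),
      Ideal.relNorm_eq_bot_iff]
    exact hA
  · rw [Ideal.absNorm_algebraMap, h2, Ideal.absNorm_relNorm, map_mul, absNorm_map_equiv, sq]

lemma quad_ram (h2 : Module.finrank R S = 2) (σ : S ≃+* S)
    (hσ : ∀ x, σ (algebraMap R S x) = algebraMap R S x)
    (Q : Ideal S) (q : Ideal R) (hQ : Q.IsPrime) (hq : q.IsPrime) (hq0 : q ≠ ⊥)
    (hd : Q ^ 2 ∣ q.map (algebraMap R S)) (z : S) : z - σ z ∈ Q := by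
  have hinj := FaithfulSMul.algebraMap_injective R S
  have hm0 : q.map (algebraMap R S) ≠ ⊥ := by
    rwa [Ne, Ideal.map_eq_bot_iff_of_injective hinj]
  have hQ0 : Q ≠ ⊥ := by
    rintro rfl
    rw [Ideal.bot_pow (by norm_num), ← Ideal.zero_eq_bot, zero_dvd_iff] at hd
    exact hm0 hd
  have hle : q.map (algebraMap R S) ≤ Q := (Ideal.le_of_dvd hd).trans (Ideal.pow_le_self (by norm_num))
  have hcomap : q = Q.comap (algebraMap R S) := by
    have := (hq.isMaximal hq0).eq_of_le (Ideal.comap_ne_top _ hQ.ne_top) (Ideal.map_le_iff_le_comap.1 hle)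
    exact this
  have hQf : Finite (S ⧸ Q) := Ideal.finiteQuotientOfFreeOfNeBot Q hQ0
  let f : R ⧸ q →+* S ⧸ Q := Ideal.quotientMap Q (algebraMap R S) hcomap.le
  have finj : Function.Injective f := Ideal.quotientMap_injective' hcomap.ge
  have hqf : Finite (R ⧸ q) := Ideal.finiteQuotientOfFreeOfNeBot q hq0
  have hle1 : q.absNorm ≤ Q.absNorm := by
    rw [Ideal.absNorm_apply, Ideal.absNorm_apply, Submodule.cardQuot_apply, Submodule.cardQuot_apply]
    exact Nat.card_le_card_of_injective f finj
  have hdv : Q.absNorm ^ 2 ≤ q.absNorm ^ 2 := by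
    have := map_dvd Ideal.absNorm hd
    rw [Ideal.absNorm_algebraMap, h2, map_pow] at this
    exact Nat.le_of_dvd (pow_pos (Nat.pos_of_ne_zero (by rwa [Ne, Ideal.absNorm_eq_zero_iff])) 2) this
  have hle2 : Q.absNorm ≤ q.absNorm := (Nat.pow_le_pow_iff_left two_ne_zero).1 hdv
  have heq := le_antisymm hle1 hle2
  have hqm : q.map (algebraMap R S) = Q ^ 2 := by
    apply eq_of_le_of_absNorm_eq _ _ (Ideal.le_of_dvd hd)
    · rwa [Ne, Ideal.absNorm_eq_zero_iff]
    · rw [Ideal.absNorm_algebraMap, h2, map_pow, heq]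
  have fsurj : Function.Surjective f := by
    rw [Ideal.absNorm_apply, Ideal.absNorm_apply, Submodule.cardQuot_apply, Submodule.cardQuot_apply] at heq
    exact ((Nat.bijective_iff_injective_and_card f).2 ⟨finj, heq⟩).2
  have hQσ : Q.map σ = Q := by
    have h1 : (q.map (algebraMap R S)).map σ = q.map (algebraMap R S) := by
      have e : ((σ : S →+* S).comp (algebraMap R S)) = algebraMap R S := RingHom.ext hσ
      conv_rhs => rw [← e]
      rw [← Ideal.map_map]
      rfl
    rw [hqm, Ideal.map_pow] at h1
    exact pow_left_injective two_ne_zero h1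
  obtain ⟨y, hy⟩ := fsurj (Ideal.Quotient.mk Q z)
  obtain ⟨y, rfl⟩ := Ideal.Quotient.mk_surjective y
  have hy1 : algebraMap R S y - z ∈ Q := by
    rw [← Ideal.Quotient.eq, ← hy]; rfl
  have hy2 := Ideal.mem_map_of_mem σ hy1
  rw [hQσ, map_sub, hσ] at hy2
  have := Q.sub_mem hy2 hy1
  simpa using this
end quad

lemma quad_aut {F L : Type*} [Field F] [Field L] [CharZero F] [Algebra F L] (h2 : Module.finrank F L = 2)
    (a : L) (ha : a ∉ Set.range (algebraMap F L)) (ha2 : a ^ 2 ∈ Set.range (algebraMap F L)) :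
    ∃ σ : L ≃ₐ[F] L, σ a = - a ∧ (∀ x, σ (σ x) = x) ∧ (∀ x, σ x = x → x ∈ Set.range (algebraMap F L)) ∧
      (∀ x, algebraMap F L (Algebra.norm F x) = x * σ x) := by
  classical
  have : Algebra.IsQuadraticExtension F L := ⟨h2⟩
  have : FiniteDimensional F L := Module.finite_of_finrank_pos (by omega)
  have : IsGalois F L := inferInstance
  have hc : Nat.card (L ≃ₐ[F] L) = 2 := by rw [IsGalois.card_aut_eq_finrank, h2]
  have hex : ∃ σ : L ≃ₐ[F] L, σ a ≠ a := by
    by_contra! h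
    exact ha ((IsGalois.mem_range_algebraMap_iff_fixed a).2 h)
  obtain ⟨σ, hσ⟩ := hex
  have hσ1 : σ ≠ 1 := by rintro rfl; exact hσ rfl
  have huniv : ∀ g : L ≃ₐ[F] L, g = 1 ∨ g = σ := by
    intro g
    by_contra! h
    have : Finset.card {1, σ, g} ≤ Nat.card (L ≃ₐ[F] L) := by
      rw [Nat.card_eq_fintype_card]; exact Finset.card_le_univ _
    rw [Finset.card_eq_three.2 ⟨1, σ, g, hσ1.symm, h.1.symm, h.2.symm, rfl⟩, hc] at this
    omega
  refine ⟨σ, ?_, ?_, ?_, ?_⟩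
  · obtain ⟨c, hc⟩ := ha2
    have : σ a ^ 2 = a ^ 2 := by rw [← map_pow, ← hc, AlgEquiv.commutes]
    exact (sq_eq_sq_iff_eq_or_eq_neg.1 this).resolve_left hσ
  · intro x
    have : σ * σ = 1 := by
      rcases huniv (σ * σ) with h | h
      · exact h
      · exact absurd (mul_eq_left.1 h) hσ1
    exact DFunLike.congr_fun this x
  · intro x hx
    apply (IsGalois.mem_range_algebraMap_iff_fixed x).2
    intro g
    rcases huniv g with rfl | rfl
    · rfl
    · exact hx
  · intro x
    rw [Algebra.norm_eq_prod_automorphisms]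
    have : (Finset.univ : Finset (L ≃ₐ[F] L)) = {1, σ} := by
      ext g; simpa using huniv g
    rw [this, Finset.prod_pair hσ1.symm]; rfl
end PQ

namespace PQ
universe u
open NumberField.Units in
lemma units_of_rank (K : Type*) [Field K] [NumberField K] (h : 2 ≤ Units.rank K) :
    ¬ ∃ ε : (𝓞 K)ˣ, ∀ s : (𝓞 K)ˣ, ∃ t : (𝓞 K)ˣ, s = t ^ 2 ∨ s = - t ^ 2 ∨ s = ε * t ^ 2 ∨ s = - (ε * t ^ 2) := by
  rintro ⟨ε, hε⟩
  have hex : ∀ s : (𝓞 K)ˣ, ∃ e : torsion K × (Fin (Units.rank K) → ℤ),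
      s = e.1 * ∏ i, (fundSystem K i) ^ (e.2 i) := fun s => (exist_unique_eq_mul_prod K s).exists
  choose e he using hex
  have huniq : ∀ (s : (𝓞 K)ˣ) (z : torsion K) (f : Fin (Units.rank K) → ℤ),
      s = z * ∏ i, (fundSystem K i) ^ (f i) → (e s).2 = f := by
    intro s z f hf
    exact congrArg Prod.snd ((exist_unique_eq_mul_prod K s).unique (y₁ := e s) (y₂ := (z, f)) (he s) hf)
  let c : (𝓞 K)ˣ → Fin (Units.rank K) → ℤ := fun s => (e s).2
  have cmul : ∀ s t i, c (s * t) i = c s i + c t i := by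
    intro s t i
    refine congrFun (huniq (s * t) ((e s).1 * (e t).1) (fun i => c s i + c t i) ?_) i
    simp only [zpow_add, Finset.prod_mul_distrib]
    conv_lhs => rw [he s, he t]
    push_cast
    exact mul_mul_mul_comm _ _ _ _
  have cneg : ∀ s i, c (-s) i = c s i := by
    intro s i
    have h1 : (-1 : (𝓞 K)ˣ) ∈ torsion K := by
      rw [torsion, CommGroup.mem_torsion, isOfFinOrder_iff_pow_eq_one]
      exact ⟨2, by norm_num, by simp⟩
    refine congrFun (huniq (-s) (⟨-1, h1⟩ * (e s).1) (fun i => c s i) ?_) i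
    conv_lhs => rw [he s, ← neg_one_mul]
    push_cast
    rw [mul_assoc]
  have csq : ∀ s i, c (s ^ 2) i = 2 * c s i := by
    intro s i; rw [sq, cmul]; ring
  have key : ∀ s, (∀ i, Even (c s i)) ∨ (∀ i, Even (c s i - c ε i)) := by
    intro s
    obtain ⟨t, h | h | h | h⟩ := hε s
    · left; intro i; rw [h, csq]; exact even_two_mul _
    · left; intro i; rw [h, cneg, csq]; exact even_two_mul _
    · right; intro i; rw [h, cmul, csq, add_sub_cancel_left]; exact even_two_mul _
    · right; intro i; rw [h, cneg, cmul, csq, add_sub_cancel_left]; exact even_two_mul _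
  have cf : ∀ j i, c (fundSystem K j) i = if j = i then 1 else 0 := by
    intro j i
    refine congrFun (huniq _ 1 (fun i => if j = i then 1 else 0) ?_) i
    rw [Finset.prod_eq_single j]
    · simp
    · intro b _ hb; simp [hb.symm]
    · simp
  let j0 : Fin (Units.rank K) := ⟨0, by omega⟩
  let j1 : Fin (Units.rank K) := ⟨1, by omega⟩
  have hne : j0 ≠ j1 := by simp [j0, j1]
  have k0 := (key (fundSystem K j0)).resolve_left (fun h => by have := h j0; rw [cf] at this; simp at this)
  have k1 := (key (fundSystem K j1)).resolve_left (fun h => by have := h j1; rw [cf] at this; simp at this)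
  have := (k0 j0).sub (k1 j0)
  rw [cf, cf, if_pos rfl, if_neg hne.symm] at this
  simp at this

open NumberField.InfinitePlace in
lemma rank_ge (K : Type*) [Field K] [NumberField K] (h4 : Module.finrank ℚ K = 4)
    (φ₁ φ₂ : K →+* ℝ) (x : K) (hx : |φ₁ x| ≠ |φ₂ x|) : 2 ≤ Units.rank K := by
  classical
  have hr : ∀ φ : K →+* ℝ, IsReal (InfinitePlace.mk (Complex.ofRealHom.comp φ)) := by
    intro φ
    rw [isReal_mk_iff, ComplexEmbedding.isReal_iff]
    ext y
    simp [ComplexEmbedding.conjugate_coe_eq]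
  have hle : 2 ≤ nrRealPlaces K := by
    let a : {w : InfinitePlace K // IsReal w} := ⟨_, hr φ₁⟩
    let b : {w : InfinitePlace K // IsReal w} := ⟨_, hr φ₂⟩
    have hab : a ≠ b := by
      intro h
      have h1 := congrArg (fun w => w.1 x) h
      simp [a, b, InfinitePlace.apply] at h1
      exact hx h1
    have : 1 < Fintype.card {w : InfinitePlace K // IsReal w} := Fintype.one_lt_card_iff.2 ⟨a, b, hab⟩
    exact this
  have h1 := card_add_two_mul_card_eq_rank K
  have h2 := card_eq_nrRealPlaces_add_nrComplexPlaces K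
  rw [h4] at h1
  unfold Units.rank
  omega

lemma intNorm_of (k K : Type*) [Field k] [NumberField k] [Field K] [NumberField K] [Algebra k K]
   (σ : K ≃ₐ[k] K) (h : ∀ x, algebraMap k K (Algebra.norm k x) = x * σ x) (x : 𝓞 K) :
   algebraMap (𝓞 k) (𝓞 K) (Algebra.intNorm (𝓞 k) (𝓞 K) x) = x * RingOfIntegers.mapRingEquiv σ.toRingEquiv x := by
  apply RingOfIntegers.ext
  have := Algebra.algebraMap_intNorm (A := 𝓞 k) (K := k) (L := K) (B := 𝓞 K) x
  have h2 := h (algebraMap (𝓞 K) K x)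
  rw [← this] at h2
  exact h2

lemma intNorm_of_int (k : Type*) [Field k] [NumberField k]
   (σ : k ≃ₐ[ℚ] k) (h : ∀ x, algebraMap ℚ k (Algebra.norm ℚ x) = x * σ x) (x : 𝓞 k) :
   algebraMap ℤ (𝓞 k) (Algebra.intNorm ℤ (𝓞 k) x) = x * RingOfIntegers.mapRingEquiv σ.toRingEquiv x := by
  apply RingOfIntegers.ext
  have := Algebra.algebraMap_intNorm (A := ℤ) (K := ℚ) (L := k) (B := 𝓞 k) x
  have h2 := h (algebraMap (𝓞 k) k x)
  rw [← this] at h2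
  refine Eq.trans ?_ h2
  simp
end PQ

namespace PQ
universe u

lemma not_rat_sq (p : ℕ) (hp : p.Prime) (b : ℚ) : b ^ 2 ≠ (p : ℚ) := by
  intro h
  have h1 : IsSquare (p : ℚ) := ⟨b, by rw [← h, sq]⟩
  rw [Rat.isSquare_natCast_iff] at h1
  exact (Nat.Prime.prime hp).irreducible.not_isSquare h1

lemma finrank_k (p : ℕ) (hp : p.Prime) (K : Type*) [Field K] [NumberField K] (w : K) (hw : w ^ 2 = p) :
    Module.finrank ℚ (IntermediateField.adjoin ℚ {w}) = 2 := by
  have hirr : Irreducible (X ^ 2 - C (p : ℚ) : ℚ[X]) :=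
    X_pow_sub_C_irreducible_of_prime Nat.prime_two (not_rat_sq p hp)
  have hmin := minpoly.eq_of_irreducible_of_monic (x := w) hirr (by simp [hw]) (monic_X_pow_sub_C _ (by norm_num))
  rw [IntermediateField.adjoin.finrank (Algebra.IsIntegral.isIntegral w), ← hmin, natDegree_X_pow_sub_C]

noncomputable def lift_int {K : Type*} [Field K] (x : K) (h : IsIntegral ℤ x) : 𝓞 K := ⟨x, h⟩

set_option maxHeartbeats 1000000 in
lemma exists_tower (p : ℕ) (hp : p.Prime) (hmod : p % 16 = 1) (K : Type u) [Field K] [NumberField K]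
    (k : Type u) [Field k] [NumberField k] [Algebra k K]
    (hk : Module.finrank ℚ k = 2) (hkK : Module.finrank k K = 2) (hK : Module.finrank ℚ K = 4)
    (w0 : k) (r0 : K) (hw : w0 ^ 2 = p) (hr : r0 ^ 2 = algebraMap k K w0)
    (hr' : r0 ∉ Set.range (algebraMap k K))
    (φ0 : K →+* ℝ) (hφ : 0 < φ0 r0) : Nonempty (Tower p (𝓞 k) (𝓞 K)) := by
  have hw' : w0 ∉ Set.range (algebraMap ℚ k) := by
    rintro ⟨b, rfl⟩
    rw [← map_pow, ← map_natCast (algebraMap ℚ k)] at hw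
    exact not_rat_sq p hp b ((algebraMap ℚ k).injective hw)
  obtain ⟨τ, hτw, hττ, hτf, hτn⟩ := quad_aut hk w0 hw' ⟨p, by rw [hw, map_natCast]⟩
  obtain ⟨σ, hσr, hσσ, hσf, hσn⟩ := quad_aut hkK r0 hr' ⟨w0, hr.symm⟩
  obtain ⟨m, hm⟩ : ∃ m, p = 16 * m + 1 := ⟨p / 16, by omega⟩
  have hwint : IsIntegral ℤ w0 := IsIntegral.of_pow (n := 2) (by norm_num) (by
    have h1 : IsIntegral ℤ (algebraMap ℤ k (p : ℤ)) := isIntegral_algebraMap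
    rw [hw]; simpa using h1)
  have hrint : IsIntegral ℤ r0 := IsIntegral.of_pow (n := 2) (by norm_num) (by
    rw [hr]; exact map_isIntegral_int _ hwint)
  let ω0 : k := (1 + w0) / 2
  have hω2 : ω0 ^ 2 = ω0 + 4 * m := by
    have : w0 ^ 2 = 16 * m + 1 := by rw [hw, hm]; push_cast; ring
    simp only [ω0]; field_simp; linear_combination this
  have hωint : IsIntegral ℤ ω0 := by
    refine ⟨X ^ 2 - (X + C (4 * m : ℤ)), ?_, ?_⟩
    · apply monic_X_pow_sub
      compute_degree!
    · simp [hω2]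
  let w : 𝓞 k := ⟨w0, hwint⟩
  let ω : 𝓞 k := ⟨ω0, hωint⟩
  let r : 𝓞 K := ⟨r0, hrint⟩
  let g0 : K := algebraMap k K ω0 * (r0 + 1) / 2
  have hg2 : g0 ^ 2 = algebraMap k K ω0 * g0 + 2 * m * algebraMap k K ω0 := by
    have h1 : (algebraMap k K ω0) ^ 2 = algebraMap k K ω0 + 4 * m := by
      rw [← map_pow, hω2]; simp only [map_add, map_mul, map_natCast, map_ofNat]
    have h2 : r0 ^ 2 = 2 * algebraMap k K ω0 - 1 := by
      rw [hr]; simp only [ω0, map_div₀, map_add, map_one, map_ofNat]; field_simp; ring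
    simp only [g0]
    generalize algebraMap k K ω0 = v at *
    field_simp
    linear_combination v ^ 2 * h2 + (2 * v) * h1
  have hgint : IsIntegral ℤ g0 := by
    have : IsIntegral (𝓞 k) g0 := by
      refine ⟨X ^ 2 - (C ω * X + C (2 * m * ω)), ?_, ?_⟩
      · apply monic_X_pow_sub
        compute_degree!
      · have h1 : algebraMap (𝓞 k) K ω = algebraMap k K ω0 := rfl
        simp only [eval₂_sub, eval₂_add, eval₂_mul, eval₂_X_pow, eval₂_X, eval₂_C, eval₂_natCast, eval₂_ofNat, map_mul, map_natCast, map_ofNat, hg2, h1, sub_self]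
    exact isIntegral_trans (R := ℤ) (A := 𝓞 k) g0 this
  let g : 𝓞 K := ⟨g0, hgint⟩
  have hrkZ : Module.finrank ℤ (𝓞 k) = 2 := by rw [RingOfIntegers.rank, hk]
  have hrk : Module.finrank (𝓞 k) (𝓞 K) = 2 := by
    rw [← IsFractionRing.finrank_eq (𝓞 k) k (𝓞 K) K, hkK]
  refine ⟨{ hmod := hmod, w := w, r := r, w_sq := ?_, r_sq := ?_
            τ := RingOfIntegers.mapRingEquiv τ.toRingEquiv
            σ := RingOfIntegers.mapRingEquiv σ.toRingEquiv
            τ_w := ?_, σ_r := ?_, τ_τ := ?_, σ_σ := ?_, σ_alg := ?_, τ_fix := ?_, σ_fix := ?_, inj := ?_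
            normR' := ?_, absNorm_map := ?_, normS := ?_, ramR := ?_, ramS := ?_
            φ := φ0.comp (algebraMap (𝓞 K) K), φ_r := hφ, ω := ω, two_ω := ?_, g := g, two_g := ?_
            units := ?_ }⟩
  · apply RingOfIntegers.ext; exact hw.trans (by simp)
  · apply RingOfIntegers.ext; exact hr
  · apply RingOfIntegers.ext; exact hτw
  · apply RingOfIntegers.ext; exact hσr
  · intro x; apply RingOfIntegers.ext; exact hττ _
  · intro x; apply RingOfIntegers.ext; exact hσσ _
  · intro x; apply RingOfIntegers.ext; exact σ.commutes _
  · intro x hx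
    obtain ⟨y, hy⟩ := hτf x (congrArg (algebraMap (𝓞 k) k) hx)
    have hyi : IsIntegral ℤ y := by
      have h1 : IsIntegral ℤ (algebraMap ℚ k y) := hy.symm ▸ x.2
      exact (isIntegral_algebraMap_iff (algebraMap ℚ k).injective).1 h1
    obtain ⟨n, hn⟩ := IsIntegrallyClosed.isIntegral_iff.1 hyi
    refine ⟨n, ?_⟩
    apply RingOfIntegers.ext
    rw [← hy, ← hn]; simp
  · intro x hx
    obtain ⟨y, hy⟩ := hσf x (congrArg (algebraMap (𝓞 K) K) hx)
    have hyi : IsIntegral ℤ y := by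
      have h1 : IsIntegral ℤ (algebraMap k K y) := hy.symm ▸ x.2
      exact (isIntegral_algebraMap_iff (algebraMap k K).injective).1 h1
    exact ⟨⟨y, hyi⟩, RingOfIntegers.ext hy⟩
  · exact FaithfulSMul.algebraMap_injective _ _
  · intro A
    rw [← quad_norm (R := ℤ) hrkZ _ (intNorm_of_int k τ hτn) A, Ideal.relNorm_int, Ideal.map_span]
    simp
  · intro J
    rw [Ideal.absNorm_algebraMap, hrk]
  · intro A
    exact ⟨_, quad_norm hrk _ (intNorm_of k K σ hσn) A⟩
  · intro Q q hQ hq hd z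
    refine quad_ram (R := ℤ) hrkZ _ ?_ Q (Ideal.span {(q : ℤ)}) hQ ?_ ?_ ?_ z
    · intro x; simp
    · rw [Ideal.span_singleton_prime (by exact_mod_cast hq.ne_zero)]
      exact Nat.prime_iff_prime_int.1 hq
    · rw [Ne, Ideal.span_singleton_eq_bot]; exact_mod_cast hq.ne_zero
    · rw [Ideal.map_span]; simpa using hd
  · intro Q q hQ hq hq0 hd z
    exact quad_ram hrk _ (fun x => RingOfIntegers.ext (σ.commutes _)) Q q hQ hq hq0 hd z
  · apply RingOfIntegers.ext
    change (2 : k) * ((1 + w0) / 2) = 1 + w0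
    field_simp
  · apply RingOfIntegers.ext
    change (2 : K) * (algebraMap k K ω0 * (r0 + 1) / 2) = algebraMap k K ω0 * (r0 + 1)
    field_simp
  · apply units_of_rank
    apply rank_ge K hK φ0 (φ0.comp σ.toRingEquiv.toRingHom) (1 + r0)
    change |φ0 (1 + r0)| ≠ |φ0 (σ (1 + r0))|
    rw [map_add σ, map_one σ, hσr, map_add, map_add, map_neg, map_one]
    intro h
    rw [abs_eq_abs] at h
    rcases h with h | h <;> linarith

end PQ

open PQ in
/-- For a prime `p ≡ 1 (mod 16)` and `K = ℚ(⁴√p)`, one has `2 ∥ h_K`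
(i.e. `2 ∣ h_K` and `4 ∤ h_K`) if and only if the quartic residue symbol `(2/p)₄ = -1`,
i.e. iff `2` is not a fourth power modulo `p`. -/
theorem two_exactly_divides_classNumber_pure_quartic_iff
    (p : ℕ) (hp : p.Prime) (hmod : p % 16 = 1)
    (K : Type*) [Field K] [NumberField K]
    (hK : Nonempty (K ≃ₐ[ℚ] AdjoinRoot (X ^ 4 - C (p : ℚ)))) :
    (2 ∣ classNumber K ∧ ¬ 4 ∣ classNumber K) ↔ ¬ ∃ x : ZMod p, x ^ 4 = 2 := by
  have : Fact p.Prime := ⟨hp⟩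
  obtain ⟨e⟩ := hK
  have hne : (X ^ 4 - C (p : ℚ) : ℚ[X]) ≠ 0 := (monic_X_pow_sub_C _ (by norm_num)).ne_zero
  have h4 : Module.finrank ℚ K = 4 := by
    rw [e.toLinearEquiv.finrank_eq, (AdjoinRoot.powerBasis hne).finrank, AdjoinRoot.powerBasis_dim,
      natDegree_X_pow_sub_C]
  let ρ := AdjoinRoot.root (X ^ 4 - C (p : ℚ))
  have hρ : ρ ^ 4 = (p : AdjoinRoot (X ^ 4 - C (p : ℚ))) := by
    have := AdjoinRoot.eval₂_root (X ^ 4 - C (p : ℚ))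
    simp only [eval₂_sub, eval₂_X_pow, eval₂_C] at this
    rw [map_natCast] at this
    exact sub_eq_zero.1 this
  let r0 : K := e.symm ρ
  have hr0 : r0 ^ 4 = p := by simp only [r0]; rw [← map_pow, hρ, map_natCast]
  have hw0 : (r0 ^ 2) ^ 2 = (p : K) := by rw [← pow_mul, hr0]
  have hk := finrank_k p hp K (r0 ^ 2) hw0
  have hkK : Module.finrank (IntermediateField.adjoin ℚ {r0 ^ 2}) K = 2 := by
    have := Module.finrank_mul_finrank ℚ (IntermediateField.adjoin ℚ {r0 ^ 2}) K
    rw [hk, h4] at this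
    omega
  have htop : Algebra.adjoin ℚ {r0} = ⊤ := by
    have h1 := AdjoinRoot.adjoinRoot_eq_top (f := X ^ 4 - C (p : ℚ))
    have h2 := congrArg (Subalgebra.map (e.symm : _ →ₐ[ℚ] K)) h1
    rw [AlgHom.map_adjoin, Set.image_singleton, Algebra.map_top] at h2
    refine Eq.trans ?_ (h2.trans ?_)
    · rfl
    exact (AlgHom.range_eq_top _).2 e.symm.surjective
  have hr' : r0 ∉ Set.range (algebraMap (IntermediateField.adjoin ℚ {r0 ^ 2}) K) := by
    rintro ⟨y, hy⟩
    have hmem : r0 ∈ IntermediateField.adjoin ℚ {r0 ^ 2} := by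
      have h0 : (y : K) = r0 := hy
      exact h0.subst (motive := fun t => t ∈ IntermediateField.adjoin ℚ {r0 ^ 2}) y.2
    have h1 : Algebra.adjoin ℚ {r0} ≤ (IntermediateField.adjoin ℚ {r0 ^ 2}).toSubalgebra :=
      Algebra.adjoin_le (Set.singleton_subset_iff.2 hmem)
    rw [htop, top_le_iff] at h1
    have h2 : IntermediateField.adjoin ℚ {r0 ^ 2} = ⊤ :=
      IntermediateField.toSubalgebra_injective (by rw [h1, IntermediateField.top_toSubalgebra])
    rw [h2, IntermediateField.finrank_top] at hkK
    omega
  let a : ℝ := (p : ℝ) ^ ((1 : ℝ) / 4)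
  have hp0 : (0 : ℝ) < p := by exact_mod_cast hp.pos
  have ha : a ^ 4 = p := by
    simp only [a]
    rw [← Real.rpow_natCast, ← Real.rpow_mul hp0.le]; norm_num
  let φ' : AdjoinRoot (X ^ 4 - C (p : ℚ)) →+* ℝ := AdjoinRoot.lift (algebraMap ℚ ℝ) a (by simp [ha])
  let φ0 : K →+* ℝ := φ'.comp (e : K ≃+* _).toRingHom
  have hφ : 0 < φ0 r0 := by
    have : φ0 r0 = a := by
      change φ' (e (e.symm ρ)) = a
      rw [e.apply_symm_apply]
      exact AdjoinRoot.lift_root _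
    rw [this]; exact Real.rpow_pos_of_pos hp0 _
  obtain ⟨T⟩ := exists_tower p hp hmod K (IntermediateField.adjoin ℚ {r0 ^ 2}) hk hkK h4
    (IntermediateField.AdjoinSimple.gen ℚ (r0 ^ 2)) r0
    (by apply (algebraMap (IntermediateField.adjoin ℚ {r0 ^ 2}) K).injective
        rw [map_pow, IntermediateField.AdjoinSimple.algebraMap_gen, hw0, map_natCast])
    (by rw [IntermediateField.AdjoinSimple.algebraMap_gen]) hr' φ0 hφ
  have key := T.main_iff
  rw [Nat.card_eq_fintype_card] at key
  have hcl : classNumber K = Fintype.card (ClassGroup (𝓞 K)) := rfl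
  rw [hcl, key]
  apply not_congr
  have h4d : 4 ∣ p - 1 := by omega
  constructor
  · intro h
    exact exists_pow_of_pow_eq_one p 4 h4d (by norm_num) 2 h
  · rintro ⟨x, hx⟩
    have hx0 : x ≠ 0 := by
      rintro rfl
      have h2 : ((2 : ℕ) : ZMod p) = 0 := by
        push_cast; rw [← hx]; ring
      rw [ZMod.natCast_eq_zero_iff] at h2
      have := Nat.le_of_dvd (by norm_num) h2
      have := hp.two_le
      omega
    rw [← hx, ← pow_mul, Nat.mul_div_cancel' h4d]
    exact ZMod.pow_card_sub_one_eq_one hx0
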